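/- arXiv:0808.0934 — 8 statements merged into one kernel-verified Lean document; each statement's English description precedes it below -/
import Mathlib

section
/- Let a, b, c, d, e, f be nonzero integers such that at least one of them divides its partner (i.e., a ∣ b, or b ∣ a, or c ∣ d, or d ∣ c, or e ∣ f, or f ∣ e). If at least two of the three equalities |a| = |b|, |c| = |d|, |e| = |f| fail, then the triangle G(a,b;c,d;e,f) is not developable. -/
/-!
Up to a cyclic rotation of the generators and the substitution `y ↦ y⁻¹` (which swaps `a` and `b`),
one may assume `b = a k`. Passing to `X = x ^ (2|a|)`, `v = y ^ 2`, `w = z ^ 2` gives relations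
`v⁻¹ X v = X ^ K`, `w⁻¹ v ^ C w = v ^ D`, `X⁻¹ w ^ E X = w ^ F` whose exponents are positive natural
numbers: `K = k²`, `C = c²`, `D = d²`, `E = e ^ (2|a|)`, `F = f ^ (2|a|)`.

Conjugating `w ^ (-E) v ^ (C ^ E N) w ^ E = v ^ (D ^ E N)` by `X`, which turns `w ^ E` into `w ^ F`
and `v ^ m` into `v ^ m X ^ (1 - K ^ m)`, and comparing with conjugation of powers of `v` by `w ^ F`
yields, for all `M ≥ 0`, the key relation (`key_relation`)
`w ^ (-F) X ^ P w ^ F = v ^ (r M) X ^ Q`, where `r = D ^ E C ^ F - D ^ F C ^ E`,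
`P = 1 - K ^ (C ^ (E + F) M)` and `Q = 1 - K ^ (C ^ F D ^ E M)`.

Developability makes `x, y, z` of infinite order and makes the `y`-exponent well defined on the
subgroup generated by `x` and `y`. The key relation then gives a contradiction (`core`):
* if `K = 1`, it reads `v ^ r = 1` although `r ≠ 0`;
* if `C = D`, it says that a positive power `X ^ n` commutes with `w ^ F`, whereas conjugation by
  `X ^ n` takes `w ^ (E ^ n)` to `w ^ (F ^ n)`;
* if `E = F`, then `X` commutes with `w ^ F`, so `P = Q`, which forces `C = D`;
* otherwise, comparing the relations for `M = 1` and `M = 2` gives `r P₂ = 2 r P₁`, whereas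
  `P₂ = P₁ (2 - P₁)` with `P₁ ≠ 0`.
-/


/-- Generators of the triangle group. -/
inductive TGen | x | y | z
  deriving DecidableEq

/-- Generators of a Baumslag-Solitar group. -/
inductive BGen | s | t
  deriving DecidableEq

open FreeGroup in
/-- Relators of the triangle of Baumslag-Solitar groups `G(a,b;c,d;e,f)`. -/
def triRels (a b c d e f : ℤ) : Set (FreeGroup TGen) :=
  {(of TGen.y)⁻¹ * (of TGen.x) ^ a * of TGen.y * ((of TGen.x) ^ b)⁻¹,
   (of TGen.z)⁻¹ * (of TGen.y) ^ c * of TGen.z * ((of TGen.y) ^ d)⁻¹,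
   (of TGen.x)⁻¹ * (of TGen.z) ^ e * of TGen.x * ((of TGen.z) ^ f)⁻¹}

/-- The triangle of Baumslag-Solitar groups `G(a,b;c,d;e,f)`. -/
abbrev TriG (a b c d e f : ℤ) := PresentedGroup (triRels a b c d e f)

/-- The generator `x` of `G(a,b;c,d;e,f)`. -/
def gx (a b c d e f : ℤ) : TriG a b c d e f := PresentedGroup.of TGen.x
/-- The generator `y` of `G(a,b;c,d;e,f)`. -/
def gy (a b c d e f : ℤ) : TriG a b c d e f := PresentedGroup.of TGen.y
/-- The generator `z` of `G(a,b;c,d;e,f)`. -/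
def gz (a b c d e f : ℤ) : TriG a b c d e f := PresentedGroup.of TGen.z

open FreeGroup in
/-- Relator of the Baumslag-Solitar group `BS(m,n)`. -/
def bsRels (m n : ℤ) : Set (FreeGroup BGen) :=
  {(of BGen.t)⁻¹ * (of BGen.s) ^ m * of BGen.t * ((of BGen.s) ^ n)⁻¹}

/-- The Baumslag-Solitar group `BS(m,n)`. -/
abbrev BS (m n : ℤ) := PresentedGroup (bsRels m n)

/-- The generator `s` of `BS(m,n)`. -/
def bs (m n : ℤ) : BS m n := PresentedGroup.of BGen.s
/-- The generator `t` of `BS(m,n)`. -/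
def bt (m n : ℤ) : BS m n := PresentedGroup.of BGen.t

lemma mk_rel_eq_one {α : Type*} {rels : Set (FreeGroup α)} {r : FreeGroup α} (hr : r ∈ rels) :
    PresentedGroup.mk rels r = 1 :=
  (QuotientGroup.eq_one_iff _).mpr (Subgroup.subset_normalClosure hr)

lemma relXY (a b c d e f : ℤ) :
    (gy a b c d e f)⁻¹ * gx a b c d e f ^ a * gy a b c d e f * (gx a b c d e f ^ b)⁻¹ = 1 := by
  have h := mk_rel_eq_one (rels := triRels a b c d e f)
    (r := (FreeGroup.of TGen.y)⁻¹ * (FreeGroup.of TGen.x) ^ a * FreeGroup.of TGen.y *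
      ((FreeGroup.of TGen.x) ^ b)⁻¹) (by left; rfl)
  simpa [gx, gy, PresentedGroup.of, map_mul, map_inv, map_zpow] using h

lemma relYZ (a b c d e f : ℤ) :
    (gz a b c d e f)⁻¹ * gy a b c d e f ^ c * gz a b c d e f * (gy a b c d e f ^ d)⁻¹ = 1 := by
  have h := mk_rel_eq_one (rels := triRels a b c d e f)
    (r := (FreeGroup.of TGen.z)⁻¹ * (FreeGroup.of TGen.y) ^ c * FreeGroup.of TGen.z *
      ((FreeGroup.of TGen.y) ^ d)⁻¹) (by right; left; rfl)
  simpa [gy, gz, PresentedGroup.of, map_mul, map_inv, map_zpow] using h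

lemma relZX (a b c d e f : ℤ) :
    (gx a b c d e f)⁻¹ * gz a b c d e f ^ e * gx a b c d e f * (gz a b c d e f ^ f)⁻¹ = 1 := by
  have h := mk_rel_eq_one (rels := triRels a b c d e f)
    (r := (FreeGroup.of TGen.x)⁻¹ * (FreeGroup.of TGen.z) ^ e * FreeGroup.of TGen.x *
      ((FreeGroup.of TGen.z) ^ f)⁻¹) (by right; right; rfl)
  simpa [gz, gx, PresentedGroup.of, map_mul, map_inv, map_zpow] using h

/-- The canonical homomorphism `BS(a,b) → G(a,b;c,d;e,f)` sending `s ↦ x`, `t ↦ y`. -/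
def bsToXY (a b c d e f : ℤ) : BS a b →* TriG a b c d e f :=
  PresentedGroup.toGroup
    (f := fun g => match g with | BGen.s => gx a b c d e f | BGen.t => gy a b c d e f)
    (by
      rintro r hr
      rw [bsRels, Set.mem_singleton_iff] at hr
      subst hr
      simpa [map_mul, map_inv, map_zpow] using relXY a b c d e f)

/-- The canonical homomorphism `BS(c,d) → G(a,b;c,d;e,f)` sending `s ↦ y`, `t ↦ z`. -/
def bsToYZ (a b c d e f : ℤ) : BS c d →* TriG a b c d e f :=
  PresentedGroup.toGroup
    (f := fun g => match g with | BGen.s => gy a b c d e f | BGen.t => gz a b c d e f)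
    (by
      rintro r hr
      rw [bsRels, Set.mem_singleton_iff] at hr
      subst hr
      simpa [map_mul, map_inv, map_zpow] using relYZ a b c d e f)

/-- The canonical homomorphism `BS(e,f) → G(a,b;c,d;e,f)` sending `s ↦ z`, `t ↦ x`. -/
def bsToZX (a b c d e f : ℤ) : BS e f →* TriG a b c d e f :=
  PresentedGroup.toGroup
    (f := fun g => match g with | BGen.s => gz a b c d e f | BGen.t => gx a b c d e f)
    (by
      rintro r hr
      rw [bsRels, Set.mem_singleton_iff] at hr
      subst hr
      simpa [map_mul, map_inv, map_zpow] using relZX a b c d e f)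

/-- The triangle of groups `G(a,b;c,d;e,f)` is developable if each of the three
Baumslag-Solitar vertex groups injects into it. -/
def Developable (a b c d e f : ℤ) : Prop :=
  Function.Injective (bsToXY a b c d e f) ∧ Function.Injective (bsToYZ a b c d e f) ∧
    Function.Injective (bsToZX a b c d e f)

/-- The properties of the pair `(s, t)` in a Baumslag–Solitar group that the argument uses: `x` has
infinite order, and the `y`-exponent of powers of elements `y ^ i * x ^ j` is well defined. -/
def VertexPair {G : Type*} [Group G] (x y : G) : Prop :=
  (∀ n : ℤ, x ^ n = 1 → n = 0) ∧
    ∀ i j k l p q : ℤ, (y ^ i * x ^ j) ^ p = (y ^ k * x ^ l) ^ q → i * p = k * q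

lemma VertexPair.right {G : Type*} [Group G] {x y : G} (h : VertexPair x y) (n : ℤ)
    (hn : y ^ n = 1) : n = 0 := by
  have := h.2 n 0 0 0 1 0 (by simpa using hn)
  simpa using this

lemma VertexPair.inv_right {G : Type*} [Group G] {x y : G} (h : VertexPair x y) :
    VertexPair x y⁻¹ := by
  refine ⟨h.1, fun i j k l p q hh => ?_⟩
  have := h.2 (-i) j (-k) l p q (by simpa using hh)
  linarith

/-! ### The key relation for positive exponents -/

lemma semiconj_iterate {G : Type*} [Group G] {g h : G} {m n : ℤ}
    (H : SemiconjBy g (h ^ n) (h ^ m)) (i : ℕ) (j : ℤ) :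
    SemiconjBy (g ^ i) (h ^ (n ^ i * j)) (h ^ (m ^ i * j)) := by
  induction i generalizing j with
  | zero => simp
  | succ i ih =>
    rw [pow_succ g]
    have h1 := ih (m * j)
    have h2 := H.zpow_right (n ^ i * j)
    simp only [← zpow_mul] at h2
    have e1 : n * (n ^ i * j) = n ^ (i + 1) * j := by ring
    have e2 : m * (n ^ i * j) = n ^ i * (m * j) := by ring
    have e3 : m ^ i * (m * j) = m ^ (i + 1) * j := by ring
    rw [e1, e2] at h2
    rw [e3] at h1
    exact h1.mul_left h2

/-- The image of `X ^ P` under conjugation by `w ^ F`. The naturals `C'` and `D'` are `C` and `D`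
themselves, in the form in which they can appear in exponents of `K`. -/
lemma key_relation {G : Type*} [Group G] {X v w : G} {K C D : ℤ} {E F : ℕ}
    (h1 : SemiconjBy v (X ^ K) X) (h2 : SemiconjBy w (v ^ D) (v ^ C))
    (h3 : SemiconjBy X (w ^ F) (w ^ E)) (M : ℕ) (C' D' : ℕ) (hC : C = C') (hD : D = D') :
    SemiconjBy (w ^ F)
      (v ^ ((D ^ E * C ^ F - D ^ F * C ^ E) * M) * X ^ (1 - K ^ (C' ^ F * D' ^ E * M)))
      (X ^ (1 - K ^ (C' ^ (E + F) * M))) := by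
  -- Conjugation by `X` on powers of `v`.
  have hv : ∀ m : ℕ, MulAut.conj X⁻¹ (v ^ (m : ℤ)) = v ^ (m : ℤ) * X ^ (1 - K ^ m) := by
    intro m
    have := semiconj_iterate (g := v) (h := X) (m := 1) (n := K) (by simpa using h1) m 1
    simp only [mul_one, one_pow, zpow_one] at this
    have h := this.eq
    rw [MulAut.conj_apply, inv_inv, sub_eq_neg_add, zpow_add, zpow_neg, zpow_one, zpow_natCast,
      ← mul_assoc]
    congr 1
    rw [eq_mul_inv_iff_mul_eq, mul_assoc, h, inv_mul_cancel_left]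
  have hw : MulAut.conj X⁻¹ (w ^ E) = w ^ F := by
    rw [MulAut.conj_apply, inv_inv, mul_assoc, ← h3.eq, inv_mul_cancel_left]
  have A := (semiconj_iterate h2 E (C ^ F * M)).map (MulAut.conj X⁻¹)
  have B := semiconj_iterate h2 F (C ^ E * M)
  have e1 : D ^ E * (C ^ F * M) = ((C' ^ F * D' ^ E * M : ℕ) : ℤ) := by
    subst hC hD; push_cast; ring
  have e2 : C ^ E * (C ^ F * M) = ((C' ^ (E + F) * M : ℕ) : ℤ) := by
    subst hC hD; push_cast; ring
  rw [hw, e1, e2, hv, hv] at A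
  have e3 : C ^ F * (C ^ E * M) = ((C' ^ (E + F) * M : ℕ) : ℤ) := by
    subst hC hD; push_cast; ring
  rw [e3] at B
  have R := B.inv_right.mul_right A
  rw [inv_mul_cancel_left, ← mul_assoc, ← zpow_neg, ← zpow_add] at R
  have e4 : -(D ^ F * (C ^ E * M)) + ((C' ^ F * D' ^ E * M : ℕ) : ℤ)
      = (D ^ E * C ^ F - D ^ F * C ^ E) * M := by
    rw [← e1]; ring
  rwa [e4] at R

lemma mixed_pow_ne {C D E F : ℕ} (hC : 0 < C) (hD : 0 < D) (hCD : C ≠ D) (hEF : E ≠ F) :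
    (D : ℤ) ^ E * C ^ F - D ^ F * C ^ E ≠ 0 := by
  intro h
  have h : D ^ E * C ^ F = D ^ F * C ^ E := by
    zify; linarith
  rcases lt_or_gt_of_ne hEF with hlt | hlt
  · obtain ⟨n, rfl⟩ := Nat.exists_eq_add_of_lt hlt
    have : C ^ (n + 1) = D ^ (n + 1) := by
      apply Nat.eq_of_mul_eq_mul_left (show 0 < D ^ E * C ^ E by positivity)
      calc _ = D ^ E * C ^ (E + n + 1) := by ring
        _ = _ := by rw [h]; ring
    exact hCD (Nat.pow_left_injective (Nat.succ_ne_zero n) this)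
  · obtain ⟨n, rfl⟩ := Nat.exists_eq_add_of_lt hlt
    have : C ^ (n + 1) = D ^ (n + 1) := by
      apply Nat.eq_of_mul_eq_mul_left (show 0 < D ^ F * C ^ F by positivity)
      calc _ = D ^ F * C ^ (F + n + 1) := by ring
        _ = _ := by rw [← h]; ring
    exact hCD (Nat.pow_left_injective (Nat.succ_ne_zero n) this)

lemma zpow_inj_of_infinite {G : Type*} [Group G] {x : G} (hx : ∀ n : ℤ, x ^ n = 1 → n = 0)
    {m n : ℤ} (h : x ^ m = x ^ n) : m = n := by
  have := hx (m - n) (by rw [zpow_sub, h, mul_inv_cancel])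
  linarith

/-- The contradiction in the case where all exponents are positive and `X` spans a subgroup mapped
into itself by conjugation by `v`. -/
lemma core {G : Type*} [Group G] {X v w : G} {K C D E F : ℕ}
    (hK : 0 < K) (hC : 0 < C) (hD : 0 < D) (hF : 0 < F)
    (h1 : SemiconjBy v (X ^ (K : ℤ)) X) (h2 : SemiconjBy w (v ^ (D : ℤ)) (v ^ (C : ℤ)))
    (h3 : SemiconjBy X (w ^ F) (w ^ E))
    (hXv : VertexPair X v) (hw : ∀ n : ℤ, w ^ n = 1 → n = 0)
    (htwo : (K ≠ 1 ∧ C ≠ D) ∨ (K ≠ 1 ∧ E ≠ F) ∨ (C ≠ D ∧ E ≠ F)) : False := by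
  have key := fun M => key_relation h1 h2 h3 M C D rfl rfl
  have key1 := key 1
  simp only [Nat.cast_one, mul_one] at key1
  by_cases hK1 : K = 1
  · subst hK1
    have hne : C ≠ D ∧ E ≠ F := by tauto
    simp only [Nat.cast_one, one_pow, sub_self, zpow_zero, mul_one] at key1
    have := key1.eq
    rw [one_mul, mul_eq_left] at this
    exact mixed_pow_ne hC hD hne.1 hne.2 (hXv.right _ this)
  have hK2 : 1 < K := by omega
  by_cases hCD : C = D
  · subst hCD
    have hEF : E ≠ F := by tauto
    have e0 : (C : ℤ) ^ E * C ^ F - C ^ F * C ^ E = 0 := by ring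
    have e1 : C ^ F * C ^ E = C ^ (E + F) := by ring
    rw [e0, zpow_zero, one_mul, e1] at key1
    have hs : C ^ (E + F) ≠ 0 := by positivity
    obtain ⟨n, hn⟩ : ∃ n : ℕ, K ^ (C ^ (E + F)) = n + 1 + 1 :=
      ⟨K ^ (C ^ (E + F)) - 2, by have := Nat.one_lt_pow hs hK2; omega⟩
    have hn' : 1 - (K : ℤ) ^ (C ^ (E + F)) = -((n + 1 : ℕ) : ℤ) := by
      have : (K : ℤ) ^ (C ^ (E + F)) = n + 1 + 1 := by exact_mod_cast hn
      rw [this]; push_cast; ring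
    rw [hn', zpow_neg] at key1
    -- `X ^ (n + 1)` commutes with `w ^ F`.
    have hcomm : Commute (X ^ (n + 1)) (w ^ (F : ℤ)) := by
      have : Commute (w ^ F) ((X ^ ((n + 1 : ℕ) : ℤ))⁻¹) := key1
      have := this.inv_right.symm
      rw [inv_inv, zpow_natCast] at this
      rwa [zpow_natCast]
    have hit := semiconj_iterate (g := X) (h := w) (m := E) (n := F)
      (by simpa using h3) (n + 1) F
    have hc2 : Commute (X ^ (n + 1)) (w ^ ((F : ℤ) ^ (n + 1) * F)) := by
      have := hcomm.zpow_right ((F : ℤ) ^ (n + 1))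
      rwa [← zpow_mul, mul_comm] at this
    have heq := hit.eq
    rw [hc2.eq] at heq
    have := zpow_inj_of_infinite hw (mul_right_cancel heq)
    have h' : F ^ (n + 1) * F = E ^ (n + 1) * F := by exact_mod_cast this
    have h'' := Nat.eq_of_mul_eq_mul_right hF h'
    exact hEF (Nat.pow_left_injective (Nat.succ_ne_zero n) h'').symm
  by_cases hEF : E = F
  · subst hEF
    have e0 : (D : ℤ) ^ E * C ^ E - D ^ E * C ^ E = 0 := by ring
    rw [e0, zpow_zero, one_mul] at key1
    have hc : Commute X (w ^ E) := h3
    have heq := key1.eq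
    rw [← (hc.zpow_left _).eq] at heq
    have := zpow_inj_of_infinite hXv.1 (mul_right_cancel heq)
    have h' : K ^ (C ^ E * D ^ E) = K ^ (C ^ (E + E)) := by
      zify; linarith
    have h'' := Nat.pow_right_injective hK2 h'
    rw [pow_add] at h''
    have h3 := Nat.eq_of_mul_eq_mul_left (show 0 < C ^ E by positivity) h''
    exact hCD (Nat.pow_left_injective hF.ne' h3).symm
  have hr := mixed_pow_ne hC hD hCD hEF
  have key2 := key 2
  have hs : C ^ (E + F) ≠ 0 := by positivity
  have hKs : (1 : ℤ) < (K : ℤ) ^ (C ^ (E + F)) := by exact_mod_cast Nat.one_lt_pow hs hK2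
  have p1 := key1.zpow_right (1 - (K : ℤ) ^ (C ^ (E + F) * 2))
  have p2 := key2.zpow_right (1 - (K : ℤ) ^ (C ^ (E + F)))
  rw [← zpow_mul] at p1 p2
  rw [mul_comm (1 - (K : ℤ) ^ (C ^ (E + F) * 2))] at p2
  have hexp := hXv.2 _ _ _ _ _ _ (mul_left_cancel (p1.eq.trans p2.eq.symm))
  rw [pow_mul] at hexp
  generalize (K : ℤ) ^ (C ^ (E + F)) = q at hexp hKs
  generalize (D : ℤ) ^ E * C ^ F - D ^ F * C ^ E = r at hexp hr
  have : r * ((q - 1) * (q - 1)) = 0 := by push_cast at hexp; linarith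
  have h0 : q - 1 ≠ 0 := by linarith
  exact (mul_ne_zero hr (mul_ne_zero h0 h0)) this

/-! ### Reduction to positive exponents -/

lemma no_triangle {G : Type*} [Group G] {x y z : G} {a b c d e f : ℤ}
    (ha : a ≠ 0) (hb : b ≠ 0) (hc : c ≠ 0) (hd : d ≠ 0) (hf : f ≠ 0)
    (hab : a ∣ b)
    (h1 : SemiconjBy y (x ^ b) (x ^ a)) (h2 : SemiconjBy z (y ^ d) (y ^ c))
    (h3 : SemiconjBy x (z ^ f) (z ^ e))
    (hxy : VertexPair x y) (hz : ∀ n : ℤ, z ^ n = 1 → n = 0)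
    (htwo : (|a| ≠ |b| ∧ |c| ≠ |d|) ∨ (|a| ≠ |b| ∧ |e| ≠ |f|) ∨ (|c| ≠ |d| ∧ |e| ≠ |f|)) :
    False := by
  obtain ⟨k, rfl⟩ := hab
  have hk : k ≠ 0 := right_ne_zero_of_mul hb
  have ha' : a.natAbs ≠ 0 := Int.natAbs_ne_zero.mpr ha
  obtain ⟨σ, hσ⟩ : ∃ σ : ℤ, ((2 * a.natAbs : ℕ) : ℤ) = a * σ := by
    rcases Int.natAbs_eq a with h | h
    · exact ⟨2, by omega⟩
    · exact ⟨-2, by omega⟩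
  have c2 : ∀ t : ℤ, ((t.natAbs ^ 2 : ℕ) : ℤ) = t ^ 2 := fun t => by simp
  have cn : ∀ t : ℤ, ((t.natAbs ^ (2 * a.natAbs) : ℕ) : ℤ) = t ^ (2 * a.natAbs) := fun t => by
    push_cast
    rw [pow_mul, sq_abs, ← pow_mul]
  have p2 : ∀ s t : ℤ, |s| ≠ |t| → s.natAbs ^ 2 ≠ t.natAbs ^ 2 := fun s t h h' => by
    rw [Int.abs_eq_natAbs, Int.abs_eq_natAbs] at h
    exact h (by exact_mod_cast Nat.pow_left_injective two_ne_zero h')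
  have pn : ∀ s t : ℤ, |s| ≠ |t| →
      s.natAbs ^ (2 * a.natAbs) ≠ t.natAbs ^ (2 * a.natAbs) := fun s t h h' => by
    rw [Int.abs_eq_natAbs, Int.abs_eq_natAbs] at h
    exact h (by exact_mod_cast Nat.pow_left_injective (by omega) h')
  have pk : |a| ≠ |a * k| → k.natAbs ^ 2 ≠ 1 := fun h h' => by
    have : k.natAbs = 1 := by
      rcases Nat.pow_eq_one.mp h' with h | h
      · exact h
      · omega
    apply h
    rw [abs_mul, Int.abs_eq_natAbs k, this]; simp
  refine core (X := x ^ (2 * a.natAbs)) (v := y ^ 2) (w := z ^ 2) (K := k.natAbs ^ 2)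
    (C := c.natAbs ^ 2) (D := d.natAbs ^ 2) (E := e.natAbs ^ (2 * a.natAbs))
    (F := f.natAbs ^ (2 * a.natAbs)) ?_ ?_ ?_ ?_ ?_ ?_ ?_ ?_ ?_ ?_
  · have := Int.natAbs_pos.mpr hk; positivity
  · have := Int.natAbs_pos.mpr hc; positivity
  · have := Int.natAbs_pos.mpr hd; positivity
  · have := Int.natAbs_pos.mpr hf; positivity
  · have := semiconj_iterate (g := y) (h := x ^ a) (m := 1) (n := k)
      (by simpa [← zpow_mul] using h1) 2 σ
    rw [← zpow_natCast x, c2, ← zpow_mul, hσ]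
    rw [← zpow_mul, ← zpow_mul] at this
    convert this using 2 <;> ring
  · have := semiconj_iterate h2 2 2
    rw [c2, c2, ← zpow_natCast y 2, ← zpow_mul, ← zpow_mul]
    convert this using 2 <;> push_cast <;> ring
  · have := semiconj_iterate h3 (2 * a.natAbs) 2
    rw [← zpow_natCast (z ^ 2), ← zpow_natCast (z ^ 2), cn, cn, ← zpow_natCast z 2, ← zpow_mul,
      ← zpow_mul]
    convert this using 2 <;> push_cast <;> ring
  · refine ⟨fun n hn => ?_, fun i j k l p q h => ?_⟩
    · rw [← zpow_natCast, ← zpow_mul] at hn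
      have := hxy.1 _ hn
      rcases mul_eq_zero.mp this with h | h
      · exfalso; omega
      · exact h
    · rw [← zpow_natCast, ← zpow_natCast x, ← zpow_mul, ← zpow_mul, ← zpow_mul, ← zpow_mul] at h
      have := hxy.2 _ _ _ _ _ _ h
      push_cast at this
      linarith
  · intro n hn
    rw [← zpow_natCast, ← zpow_mul] at hn
    have := hz _ hn
    omega
  · rcases htwo with ⟨h, h'⟩ | ⟨h, h'⟩ | ⟨h, h'⟩
    · exact Or.inl ⟨pk h, p2 _ _ h'⟩
    · exact Or.inr (Or.inl ⟨pk h, pn _ _ h'⟩)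
    · exact Or.inr (Or.inr ⟨p2 _ _ h, pn _ _ h'⟩)

lemma no_triangle' {G : Type*} [Group G] {x y z : G} {a b c d e f : ℤ}
    (ha : a ≠ 0) (hb : b ≠ 0) (hc : c ≠ 0) (hd : d ≠ 0) (hf : f ≠ 0)
    (hab : a ∣ b ∨ b ∣ a)
    (h1 : SemiconjBy y (x ^ b) (x ^ a)) (h2 : SemiconjBy z (y ^ d) (y ^ c))
    (h3 : SemiconjBy x (z ^ f) (z ^ e))
    (hxy : VertexPair x y) (hz : ∀ n : ℤ, z ^ n = 1 → n = 0)
    (htwo : (|a| ≠ |b| ∧ |c| ≠ |d|) ∨ (|a| ≠ |b| ∧ |e| ≠ |f|) ∨ (|c| ≠ |d| ∧ |e| ≠ |f|)) :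
    False := by
  rcases hab with hab | hab
  · exact no_triangle ha hb hc hd hf hab h1 h2 h3 hxy hz htwo
  · refine no_triangle (y := y⁻¹) hb ha hc hd hf hab h1.inv_symm_left ?_ h3 hxy.inv_right hz
      (by rwa [ne_comm (a := |b|)])
    simpa using h2.inv_right

/-! ### Baumslag–Solitar groups -/

/-- The `t`-exponent sum on `BS(m,n)`. -/
def bsExp (m n : ℤ) : BS m n →* Multiplicative ℤ :=
  PresentedGroup.toGroup
    (f := fun g => match g with | BGen.s => 1 | BGen.t => Multiplicative.ofAdd 1)
    (by
      rintro r hr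
      rw [bsRels, Set.mem_singleton_iff] at hr
      subst hr
      simp)

/-- The action of `BS(m,n)` on `ℚ` in which `s` translates by `1` and `t` scales by `m / n`. -/
def bsAffine (m n : ℤ) (hm : m ≠ 0) (hn : n ≠ 0) : BS m n →* Equiv.Perm ℚ :=
  PresentedGroup.toGroup
    (f := fun g => match g with
      | BGen.s => Equiv.addRight (1 : ℚ)
      | BGen.t => Equiv.mulRight₀ ((m : ℚ) / n)
          (div_ne_zero (Int.cast_ne_zero.mpr hm) (Int.cast_ne_zero.mpr hn)))
    (by
      rintro r hr
      rw [bsRels, Set.mem_singleton_iff] at hr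
      subst hr
      have hm' : (m : ℚ) ≠ 0 := by exact_mod_cast hm
      have hn' : (n : ℚ) ≠ 0 := by exact_mod_cast hn
      simp only [map_mul, map_inv, map_zpow, FreeGroup.lift_apply_of]
      rw [mul_inv_eq_one, mul_assoc, inv_mul_eq_iff_eq_mul]
      ext q
      simp
      field_simp)

lemma bs_infinite (m n : ℤ) (hm : m ≠ 0) (hn : n ≠ 0) (i : ℤ) (h : bs m n ^ i = 1) : i = 0 := by
  have := congrArg (fun g => bsAffine m n hm hn g 0) h
  have e : bsAffine m n hm hn (bs m n) = Equiv.addRight (1 : ℚ) := by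
    simp [bsAffine, bs]
  simpa [map_zpow, e] using this

lemma VertexPair.of_injective {m n : ℤ} (hm : m ≠ 0) (hn : n ≠ 0) {G : Type*} [Group G]
    (β : BS m n →* G) (hβ : Function.Injective β) :
    VertexPair (β (bs m n)) (β (bt m n)) := by
  refine ⟨fun i hi => bs_infinite m n hm hn i (hβ (by simpa using hi)),
    fun i j k l p q h => ?_⟩
  have h' : (bt m n ^ i * bs m n ^ j) ^ p = (bt m n ^ k * bs m n ^ l) ^ q :=
    hβ (by simpa using h)
  have es : bsExp m n (bs m n) = 1 := by simp [bsExp, bs]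
  have et : bsExp m n (bt m n) = Multiplicative.ofAdd 1 := by simp [bsExp, bt]
  have h2 := congrArg (bsExp m n) h'
  simp only [map_mul, map_zpow, es, et, one_zpow, mul_one] at h2
  have h3 := congrArg Multiplicative.toAdd h2
  simp only [toAdd_zpow, toAdd_ofAdd, smul_eq_mul, mul_one] at h3
  linarith

lemma semiconj_of_rel {G : Type*} [Group G] {x y : G} {a b : ℤ}
    (h : y⁻¹ * x ^ a * y * (x ^ b)⁻¹ = 1) : SemiconjBy y (x ^ b) (x ^ a) := by
  rw [mul_inv_eq_one, mul_assoc, inv_mul_eq_iff_eq_mul] at h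
  exact h.symm

/-- If one of the six parameters divides its partner and at least two of the three
equalities `|a| = |b|`, `|c| = |d|`, `|e| = |f|` fail, then the triangle
`G(a,b;c,d;e,f)` is not developable. -/
theorem triangle_not_developable (a b c d e f : ℤ)
    (ha : a ≠ 0) (hb : b ≠ 0) (hc : c ≠ 0) (hd : d ≠ 0) (he : e ≠ 0) (hf : f ≠ 0)
    (hdiv : a ∣ b ∨ b ∣ a ∨ c ∣ d ∨ d ∣ c ∨ e ∣ f ∨ f ∣ e)
    (htwo : (|a| ≠ |b| ∧ |c| ≠ |d|) ∨ (|a| ≠ |b| ∧ |e| ≠ |f|) ∨ (|c| ≠ |d| ∧ |e| ≠ |f|)) :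
    ¬ Developable a b c d e f := by
  rintro ⟨i1, i2, i3⟩
  have v1 : VertexPair (gx a b c d e f) (gy a b c d e f) := by
    have := VertexPair.of_injective ha hb _ i1
    simpa [bsToXY, bs, bt] using this
  have v2 : VertexPair (gy a b c d e f) (gz a b c d e f) := by
    have := VertexPair.of_injective hc hd _ i2
    simpa [bsToYZ, bs, bt] using this
  have v3 : VertexPair (gz a b c d e f) (gx a b c d e f) := by
    have := VertexPair.of_injective he hf _ i3
    simpa [bsToZX, bs, bt] using this
  have r1 := semiconj_of_rel (relXY a b c d e f)
  have r2 := semiconj_of_rel (relYZ a b c d e f)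
  have r3 := semiconj_of_rel (relZX a b c d e f)
  have hdiv' : (a ∣ b ∨ b ∣ a) ∨ (c ∣ d ∨ d ∣ c) ∨ (e ∣ f ∨ f ∣ e) := by tauto
  rcases hdiv' with h | h | h
  · exact no_triangle' ha hb hc hd hf h r1 r2 r3 v1 v3.1 htwo
  · exact no_triangle' hc hd he hf hb h r2 r3 r1 v2 v1.1 (by tauto)
  · exact no_triangle' he hf ha hb hd h r3 r1 r2 v3 v2.1 (by tauto)
end

section
/- For all nonzero integers a, c, e and all sign choices ε, δ, φ ∈ {1, -1}, the triangle G(a, εa; c, δc; e, φe) is developable. -/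
/-- The defining relation of `BS(m,n)`. -/
lemma bs_rel (m n : ℤ) : (bt m n)⁻¹ * bs m n ^ m * bt m n = bs m n ^ n := by
  have h := mk_rel_eq_one (rels := bsRels m n)
    (r := (FreeGroup.of BGen.t)⁻¹ * (FreeGroup.of BGen.s) ^ m * FreeGroup.of BGen.t *
      ((FreeGroup.of BGen.s) ^ n)⁻¹) rfl
  rw [← mul_inv_eq_one]
  simpa [bs, bt, PresentedGroup.of, map_mul, map_inv, map_zpow] using h

/-- The relation of `BS(m, εm)` with `t` replaced by `t ^ δ`. -/
lemma bs_rel_sign (m ε δ : ℤ) (hε : ε = 1 ∨ ε = -1) (hδ : δ = 1 ∨ δ = -1) :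
    (bt m (ε * m) ^ δ)⁻¹ * bs m (ε * m) ^ m * bt m (ε * m) ^ δ = bs m (ε * m) ^ (ε * m) := by
  have h := bs_rel m (ε * m)
  rcases hδ with rfl | rfl
  · simpa using h
  · -- Raising the relation to the power `ε` interchanges `s ^ m` and `s ^ (ε * m)`.
    have h' : (bt m (ε * m))⁻¹ * bs m (ε * m) ^ (ε * m) * bt m (ε * m) = bs m (ε * m) ^ m := by
      rcases hε with rfl | rfl
      · simpa using h
      · have := congrArg (·⁻¹) h
        simpa [mul_assoc] using this
    rw [← h']
    simp [mul_assoc]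

/-- The endomorphism of `BS(m, εm)` fixing `s` and sending `t` to `t ^ δ`. -/
def signEnd (m ε δ : ℤ) (hε : ε = 1 ∨ ε = -1) (hδ : δ = 1 ∨ δ = -1) :
    BS m (ε * m) →* BS m (ε * m) :=
  PresentedGroup.toGroup
    (f := fun g => match g with | BGen.s => bs m (ε * m) | BGen.t => bt m (ε * m) ^ δ)
    (by
      rintro r hr
      rw [bsRels, Set.mem_singleton_iff] at hr
      subst hr
      simpa [mul_inv_eq_one] using bs_rel_sign m ε δ hε hδ)

lemma signEnd_bs (m ε δ : ℤ) (hε hδ) : signEnd m ε δ hε hδ (bs m (ε * m)) = bs m (ε * m) :=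
  PresentedGroup.toGroup.of _

lemma signEnd_bt (m ε δ : ℤ) (hε hδ) :
    signEnd m ε δ hε hδ (bt m (ε * m)) = bt m (ε * m) ^ δ :=
  PresentedGroup.toGroup.of _

lemma signEnd_involutive (m ε δ : ℤ) (hε hδ) : Function.Involutive (signEnd m ε δ hε hδ) := by
  have h : (signEnd m ε δ hε hδ).comp (signEnd m ε δ hε hδ) = MonoidHom.id _ := by
    apply PresentedGroup.ext
    rintro (_ | _)
    · change signEnd m ε δ hε hδ (signEnd m ε δ hε hδ (bs m (ε * m))) = bs m (ε * m)
      rw [signEnd_bs, signEnd_bs]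
    · change signEnd m ε δ hε hδ (signEnd m ε δ hε hδ (bt m (ε * m))) = bt m (ε * m)
      rw [signEnd_bt, map_zpow, signEnd_bt]
      rcases hδ with rfl | rfl <;> simp
  exact fun g => DFunLike.congr_fun h g

/-- `BS(m, εm)` embeds, by left translations `L`, in a group containing an element `σ` such that
`L s`, `L t`, `σ` satisfy the relations of `G(m, εm; k, δk; l, φl)` for all `k`, `l` and both
signs `φ`. -/
lemma exists_involution (m ε δ : ℤ) (hε : ε = 1 ∨ ε = -1) (hδ : δ = 1 ∨ δ = -1) :
    ∃ (L : BS m (ε * m) →* Equiv.Perm (BS m (ε * m))) (σ : Equiv.Perm (BS m (ε * m))),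
      Function.Injective L ∧
      (L (bt m (ε * m)))⁻¹ * L (bs m (ε * m)) ^ m * L (bt m (ε * m)) *
        (L (bs m (ε * m)) ^ (ε * m))⁻¹ = 1 ∧
      (∀ k : ℤ, σ⁻¹ * L (bt m (ε * m)) ^ k * σ * (L (bt m (ε * m)) ^ (δ * k))⁻¹ = 1) ∧
      (∀ k φ : ℤ, φ = 1 ∨ φ = -1 →
        (L (bs m (ε * m)))⁻¹ * σ ^ k * L (bs m (ε * m)) * (σ ^ (φ * k))⁻¹ = 1) := by
  set S := bs m (ε * m) with hS
  set T := bt m (ε * m) with hT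
  let τ := signEnd m ε δ hε hδ
  have hτ : Function.Involutive τ := signEnd_involutive m ε δ hε hδ
  let L := MulAction.toPermHom (BS m (ε * m)) (BS m (ε * m))
  let σ : Equiv.Perm (BS m (ε * m)) := hτ.toPerm
  -- Conjugating a left translation by an automorphism translates by the image.
  have hconj : ∀ g, σ * L g = L (τ g) * σ := by
    intro g
    ext x
    exact map_mul τ g x
  have hσ : σ⁻¹ = σ := rfl
  refine ⟨L, σ, MulAction.toPerm_injective, ?_, ?_, ?_⟩
  · rw [mul_inv_eq_one]
    simpa using congrArg L (bs_rel m (ε * m))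
  · intro k
    rw [mul_inv_eq_one, ← map_zpow, ← map_zpow, hσ, hconj, map_zpow, mul_assoc]
    have : τ T = T ^ δ := signEnd_bt m ε δ hε hδ
    rw [this, ← zpow_mul]
    nth_rewrite 2 [← hσ]
    simp
  · intro k φ hφ
    have hc : Commute σ (L S) := by
      have := hconj S
      rwa [show τ S = S from signEnd_bs m ε δ hε hδ] at this
    have hk : σ ^ (φ * k) = σ ^ k := by
      rcases hφ with rfl | rfl
      · simp
      · rw [neg_one_mul, zpow_neg, ← inv_zpow, hσ]
    rw [hk, mul_inv_eq_one, mul_assoc, (hc.zpow_left k).eq, inv_mul_cancel_left]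

/-- For all nonzero integers `a, c, e` and all sign choices, the triangle
`G(a, ±a; c, ±c; e, ±e)` is developable. -/
theorem triangle_developable_of_signs (a c e ε δ φ : ℤ)
    (ha : a ≠ 0) (hc : c ≠ 0) (he : e ≠ 0)
    (hε : ε = 1 ∨ ε = -1) (hδ : δ = 1 ∨ δ = -1) (hφ : φ = 1 ∨ φ = -1) :
    Developable a (ε * a) c (δ * c) e (φ * e) := by
  -- In each case `F` is the homomorphism from the triangle group extending `L`, with the third
  -- generator sent to `σ`.
  refine ⟨?_, ?_, ?_⟩
  · obtain ⟨L, σ, hL, h1, h2, h3⟩ := exists_involution a ε δ hε hδ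
    let F : TriG a (ε * a) c (δ * c) e (φ * e) →* _ := PresentedGroup.toGroup
      (f := fun g => match g with
        | TGen.x => L (bs a (ε * a)) | TGen.y => L (bt a (ε * a)) | TGen.z => σ)
      (by
        rintro r (rfl | rfl | rfl)
        · simpa only [map_mul, map_inv, map_zpow, FreeGroup.lift_apply_of] using h1
        · simpa only [map_mul, map_inv, map_zpow, FreeGroup.lift_apply_of] using h2 c
        · simpa only [map_mul, map_inv, map_zpow, FreeGroup.lift_apply_of] using h3 e φ hφ)
    have hF : F.comp (bsToXY a (ε * a) c (δ * c) e (φ * e)) = L := by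
      apply PresentedGroup.ext
      rintro (_ | _) <;> simp [F, bsToXY, gx, gy, bs, bt]
    rw [← hF] at hL
    exact Function.Injective.of_comp hL
  · obtain ⟨L, σ, hL, h1, h2, h3⟩ := exists_involution c δ φ hδ hφ
    let F : TriG a (ε * a) c (δ * c) e (φ * e) →* _ := PresentedGroup.toGroup
      (f := fun g => match g with
        | TGen.y => L (bs c (δ * c)) | TGen.z => L (bt c (δ * c)) | TGen.x => σ)
      (by
        rintro r (rfl | rfl | rfl)
        · simpa only [map_mul, map_inv, map_zpow, FreeGroup.lift_apply_of] using h3 a ε hε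
        · simpa only [map_mul, map_inv, map_zpow, FreeGroup.lift_apply_of] using h1
        · simpa only [map_mul, map_inv, map_zpow, FreeGroup.lift_apply_of] using h2 e)
    have hF : F.comp (bsToYZ a (ε * a) c (δ * c) e (φ * e)) = L := by
      apply PresentedGroup.ext
      rintro (_ | _) <;> simp [F, bsToYZ, gy, gz, bs, bt]
    rw [← hF] at hL
    exact Function.Injective.of_comp hL
  · obtain ⟨L, σ, hL, h1, h2, h3⟩ := exists_involution e φ ε hφ hε
    let F : TriG a (ε * a) c (δ * c) e (φ * e) →* _ := PresentedGroup.toGroup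
      (f := fun g => match g with
        | TGen.z => L (bs e (φ * e)) | TGen.x => L (bt e (φ * e)) | TGen.y => σ)
      (by
        rintro r (rfl | rfl | rfl)
        · simpa only [map_mul, map_inv, map_zpow, FreeGroup.lift_apply_of] using h2 a
        · simpa only [map_mul, map_inv, map_zpow, FreeGroup.lift_apply_of] using h3 c δ hδ
        · simpa only [map_mul, map_inv, map_zpow, FreeGroup.lift_apply_of] using h1)
    have hF : F.comp (bsToZX a (ε * a) c (δ * c) e (φ * e)) = L := by
      apply PresentedGroup.ext
      rintro (_ | _) <;> simp [F, bsToZX, gz, gx, bs, bt]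
    rw [← hF] at hL
    exact Function.Injective.of_comp hL
end

section
/- Let a, c, e be positive integers and let b be a nonzero integer with b ≠ a and b ≠ -a; let d ∈ {c, -c} and f ∈ {e, -e}. Then G(a,b;c,d;e,f) is developable if and only if one of the following holds: (i) d = c and f = e; (ii) d = c, f = -e, and a ≡ b (mod 2); (iii) d = -c, f = e, and e is even; (iv) d = -c, f = -e, e is even, and a ≡ b (mod 2). -/
/-! ### Universal properties -/

/-- The homomorphism `BS(m,n) → H` determined by images of the generators. -/
def bsLift {H : Type*} [Group H] {m n : ℤ} (S T : H) (h : T⁻¹ * S ^ m * T = S ^ n) :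
    BS m n →* H :=
  PresentedGroup.toGroup (f := fun g => match g with | BGen.s => S | BGen.t => T)
    (by
      rintro r hr
      rw [bsRels, Set.mem_singleton_iff] at hr
      subst hr
      simp [map_mul, map_inv, map_zpow, h])

section
variable {H : Type*} [Group H] {m n : ℤ}

lemma bsLift_s (S T : H) (h : T⁻¹ * S ^ m * T = S ^ n) : bsLift S T h (bs m n) = S :=
  PresentedGroup.toGroup.of _

lemma bsLift_t (S T : H) (h : T⁻¹ * S ^ m * T = S ^ n) : bsLift S T h (bt m n) = T :=
  PresentedGroup.toGroup.of _

lemma bs_hom_ext {φ ψ : BS m n →* H} (hs : φ (bs m n) = ψ (bs m n))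
    (ht : φ (bt m n) = ψ (bt m n)) : φ = ψ :=
  PresentedGroup.ext (by rintro (_ | _); exacts [hs, ht])

end

/-- The stable letter of `BS(m,n)` has infinite order, as seen by counting its exponent. -/
lemma bt_zpow_eq_one {m n k : ℤ} (h : bt m n ^ k = 1) : k = 0 := by
  have h' := congrArg (bsLift (m := m) (n := n) (1 : Multiplicative ℤ)
    (Multiplicative.ofAdd (1 : ℤ)) (by simp)) h
  rw [map_zpow, bsLift_t, MonoidHom.map_one, ← ofAdd_zsmul] at h'
  simpa using h'

/-- The homomorphism `G(a,b;c,d;e,f) → H` determined by images of the generators. -/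
def triLift {H : Type*} [Group H] {a b c d e f : ℤ} (X Y Z : H) (h₁ : Y⁻¹ * X ^ a * Y = X ^ b)
    (h₂ : Z⁻¹ * Y ^ c * Z = Y ^ d) (h₃ : X⁻¹ * Z ^ e * X = Z ^ f) : TriG a b c d e f →* H :=
  PresentedGroup.toGroup
    (f := fun g => match g with | TGen.x => X | TGen.y => Y | TGen.z => Z)
    (by
      rintro r (rfl | rfl | rfl)
      · simp [map_mul, map_inv, map_zpow, h₁]
      · simp [map_mul, map_inv, map_zpow, h₂]
      · simp [map_mul, map_inv, map_zpow, h₃])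

section
variable {a b c d e f : ℤ}

lemma bsToXY_s : bsToXY a b c d e f (bs a b) = gx a b c d e f := PresentedGroup.toGroup.of _
lemma bsToXY_t : bsToXY a b c d e f (bt a b) = gy a b c d e f := PresentedGroup.toGroup.of _
lemma bsToYZ_s : bsToYZ a b c d e f (bs c d) = gy a b c d e f := PresentedGroup.toGroup.of _
lemma bsToYZ_t : bsToYZ a b c d e f (bt c d) = gz a b c d e f := PresentedGroup.toGroup.of _
lemma bsToZX_s : bsToZX a b c d e f (bs e f) = gz a b c d e f := PresentedGroup.toGroup.of _
lemma bsToZX_t : bsToZX a b c d e f (bt e f) = gx a b c d e f := PresentedGroup.toGroup.of _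

variable {H : Type*} [Group H] {X Y Z : H} (h₁ : Y⁻¹ * X ^ a * Y = X ^ b)
    (h₂ : Z⁻¹ * Y ^ c * Z = Y ^ d) (h₃ : X⁻¹ * Z ^ e * X = Z ^ f)

lemma triLift_x : triLift X Y Z h₁ h₂ h₃ (gx a b c d e f) = X := PresentedGroup.toGroup.of _
lemma triLift_y : triLift X Y Z h₁ h₂ h₃ (gy a b c d e f) = Y := PresentedGroup.toGroup.of _
lemma triLift_z : triLift X Y Z h₁ h₂ h₃ (gz a b c d e f) = Z := PresentedGroup.toGroup.of _

end

/-! ### Obstructions to developability -/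

section
variable {Γ : Type*} [Group Γ]

lemma conj_eq_iff_semiconjBy {t u v : Γ} : t⁻¹ * u * t = v ↔ SemiconjBy t v u := by
  rw [SemiconjBy, mul_assoc, inv_mul_eq_iff_eq_mul, eq_comm]

lemma semiconjBy_pow_pow {x y : Γ} {a b : ℤ} (h : SemiconjBy y (x ^ b) (x ^ a)) (n : ℕ) :
    SemiconjBy (y ^ n) (x ^ (b ^ n)) (x ^ (a ^ n)) := by
  induction n with
  | zero => simp
  | succ n ih =>
    have h1 := ih.zpow_right b
    have h2 := h.zpow_right (a ^ n)
    rw [← zpow_mul, ← zpow_mul] at h1 h2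
    rw [pow_succ' y, pow_succ b, pow_succ' a]
    rw [mul_comm b] at h2
    exact h2.mul_left h1

lemma inverts_symm {t u : Γ} (h : SemiconjBy t u⁻¹ u) : SemiconjBy t u u⁻¹ := by
  simpa using h.inv_right

lemma commute_sq_of_semiconjBy {t u v : Γ} (h : SemiconjBy t v u) (hv : v = u ∨ v = u⁻¹) :
    Commute (t * t) u := by
  rcases hv with rfl | rfl
  · exact SemiconjBy.mul_left h h
  · exact SemiconjBy.mul_left h (inverts_symm h)

lemma zpow_commute_of_even {t u : Γ} (h : SemiconjBy t u⁻¹ u) {m : ℤ} (hm : Even m) :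
    Commute (t ^ m) u := by
  obtain ⟨k, rfl⟩ := hm
  have := (commute_sq_of_semiconjBy h (Or.inr rfl)).zpow_left k
  rwa [← sq, ← zpow_natCast, ← zpow_mul, Nat.cast_two, two_mul] at this

lemma zpow_inverts_of_odd {t u : Γ} (h : SemiconjBy t u⁻¹ u) {m : ℤ} (hm : Odd m) :
    SemiconjBy (t ^ m) u⁻¹ u := by
  obtain ⟨k, rfl⟩ := hm
  rw [zpow_add_one]
  exact SemiconjBy.mul_left (zpow_commute_of_even h (even_two_mul k)) h

/-- If `x` inverts `w`, and `v` centralizes `w` while conjugating an odd power of `x` to an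
even one, then `w` equals its inverse. -/
lemma sq_eq_one_of_parity {x v w : Γ} {m n : ℤ} (hx : SemiconjBy x w⁻¹ w)
    (hv : SemiconjBy v (x ^ n) (x ^ m)) (hw : Commute v w) (hm : Even m) (hn : Odd n) :
    w * w = 1 := by
  have h1 := zpow_commute_of_even hx hm
  have h2 := zpow_inverts_of_odd hx hn
  -- `x ^ n` is a conjugate of `x ^ m` by an element centralizing `w`, so it centralizes `w`.
  have h3 : Commute (x ^ n) w := by
    have : x ^ n = v⁻¹ * x ^ m * v := (conj_eq_iff_semiconjBy.2 hv).symm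
    rw [this]
    exact (hw.inv_left.mul_left h1).mul_left hw
  have h4 : w * x ^ n = w⁻¹ * x ^ n := h3.symm.eq.trans (inverts_symm h2).eq
  exact mul_eq_one_iff_eq_inv.2 (mul_right_cancel h4)

/-- When `x` inverts `z ^ e` and `a`, `b` have different parities, `z` has finite order: some
power of `y` centralizes `z ^ (2 * e)` and conjugates a power of `x` with exponent of one parity
to a power with exponent of the other. -/
lemma zpow_eq_one_of_parity {x y z : Γ} {a b d e : ℤ} {c : ℕ}
    (h₁ : SemiconjBy y (x ^ b) (x ^ a)) (h₂ : SemiconjBy z (y ^ d) (y ^ (c : ℤ)))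
    (h₃ : SemiconjBy x (z ^ (-e)) (z ^ e)) (hc : c ≠ 0) (hd : d = c ∨ d = -c)
    (hab : a % 2 ≠ b % 2) : z ^ (4 * e) = 1 := by
  set w := z ^ (2 * e) with hw
  have hww : z ^ (4 * e) = w * w := by rw [hw, ← zpow_add]; congr 1; ring
  have hxw : SemiconjBy x w⁻¹ w := by
    have := h₃.mul_right h₃
    rw [← zpow_add, ← zpow_add, ← two_mul, ← two_mul, mul_neg] at this
    rwa [hw, ← zpow_neg]
  have hyw : Commute (y ^ c) w := by
    have h := (commute_sq_of_semiconjBy h₂ (by rcases hd with h | h <;> simp [h])).zpow_left e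
    rw [← sq, ← zpow_natCast, ← zpow_mul, zpow_natCast y] at h
    exact h.symm
  have hp := semiconjBy_pow_pow h₁ c
  rw [hww]
  rcases Int.even_or_odd a with ha | ha <;> rcases Int.even_or_odd b with hb | hb
  · rw [Int.even_iff] at ha hb; omega
  · exact sq_eq_one_of_parity hxw hp hyw (ha.pow_of_ne_zero hc) hb.pow
  · exact sq_eq_one_of_parity hxw hp.inv_symm_left hyw.inv_left (hb.pow_of_ne_zero hc) ha.pow
  · rw [Int.odd_iff] at ha hb; omega

/-- When `z` inverts `y ^ c` and `e` is odd, `x` has finite order: `z ^ e` commutes with `x ^ 2`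
and inverts `y ^ c`, which forces `y ^ c` to conjugate `x ^ (2 * a ^ c)` to `x ^ (2 * b ^ c)` and
conversely. -/
lemma zpow_eq_one_of_odd {x y z : Γ} {a b e f : ℤ} {c : ℕ}
    (h₁ : SemiconjBy y (x ^ b) (x ^ a)) (h₂ : SemiconjBy z (y ^ (-c : ℤ)) (y ^ (c : ℤ)))
    (h₃ : SemiconjBy x (z ^ f) (z ^ e)) (hf : f = e ∨ f = -e) (he : Odd e) :
    x ^ (2 * (a ^ (2 * c) - b ^ (2 * c))) = 1 := by
  set u := z ^ e with hu
  set v := y ^ c with hv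
  have hxu : Commute (x * x) u :=
    commute_sq_of_semiconjBy h₃ (by rcases hf with h | h <;> simp [h, hu])
  have huv : SemiconjBy u v⁻¹ v := zpow_inverts_of_odd (by simpa using h₂) he
  have hp : SemiconjBy v ((x * x) ^ (b ^ c)) ((x * x) ^ (a ^ c)) := by
    have h := semiconjBy_pow_pow h₁ c
    have := h.mul_right h
    rwa [← Commute.mul_zpow (Commute.refl x), ← Commute.mul_zpow (Commute.refl x)] at this
  have hX : ∀ k : ℤ, x ^ (2 * k) = (x * x) ^ k := fun k => by
    rw [zpow_mul, zpow_ofNat, sq]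
  have hq : SemiconjBy v⁻¹ ((x * x) ^ (b ^ c)) ((x * x) ^ (a ^ c)) := by
    rw [← conj_eq_iff_semiconjBy.2 huv]
    exact SemiconjBy.mul_left (SemiconjBy.mul_left (hxu.zpow_left (a ^ c)).symm.inv_left hp)
      (hxu.zpow_left (b ^ c)).symm
  have hq' : SemiconjBy v ((x * x) ^ (a ^ c)) ((x * x) ^ (b ^ c)) := by
    simpa using hq.inv_symm_left
  have h1 := hp.zpow_right (b ^ c)
  have h2 := hq'.zpow_right (a ^ c)
  rw [← zpow_mul, ← zpow_mul] at h1 h2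
  rw [mul_comm (b ^ c) (a ^ c)] at h2
  have h3 := mul_left_cancel (h2.eq.trans h1.eq.symm)
  rw [hX, two_mul c, pow_add, pow_add, zpow_sub, h3, mul_inv_cancel]

end

/-! ### Permutation models -/

/-- An element of infinite order acts on its group by left multiplication with all orbits free,
so choosing base points gives an equivariant map to the integers. -/
lemma exists_equivariant_int {B : Type*} [Group B] {g : B} (hg : ∀ k : ℤ, g ^ k = 1 → k = 0) :
    ∃ n : B → ℤ, ∀ (k : ℤ) (h : B), n (g ^ k * h) = k + n h := by
  let s := QuotientGroup.rightRel (Subgroup.zpowers g)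
  let rep : B → B := fun h => (Quotient.mk s h).out
  have hrep : ∀ h, ∃ n : ℤ, g ^ n * rep h = h := by
    intro h
    have h1 : s (rep h) h := Quotient.mk_out (s := s) h
    rw [QuotientGroup.rightRel_apply] at h1
    obtain ⟨n, hn⟩ := h1
    exact ⟨n, by simp only at hn; rw [hn]; group⟩
  choose n hn using hrep
  refine ⟨n, fun k h => ?_⟩
  have h1 : rep (g ^ k * h) = rep h := by
    refine congrArg Quotient.out (Quotient.sound (s := s) ?_)
    change s _ _
    rw [QuotientGroup.rightRel_apply]
    exact ⟨-k, by simp⟩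
  have h2 := hn (g ^ k * h)
  rw [h1] at h2
  nth_rw 3 [← hn h] at h2
  rw [← mul_assoc, ← zpow_add] at h2
  have h3 := mul_right_cancel h2
  have := hg (n (g ^ k * h) - (k + n h)) (by rw [zpow_sub, h3, mul_inv_cancel])
  omega

/-- Left multiplication by an element of infinite order is inverted by some involution. -/
lemma exists_involution_s2 {B : Type*} [Group B] {g : B} (hg : ∀ k : ℤ, g ^ k = 1 → k = 0) :
    ∃ τ : Equiv.Perm B, τ * τ = 1 ∧
      SemiconjBy τ (MulAction.toPermHom B B g)⁻¹ (MulAction.toPermHom B B g) := by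
  obtain ⟨n, hn⟩ := exists_equivariant_int hg
  -- In the coordinate `n` on each orbit, this is `k ↦ -k`.
  have hinv : Function.Involutive fun h => g ^ (-(2 * n h)) * h := by
    intro h
    simp only [hn]
    rw [← mul_assoc, ← zpow_add]
    ring_nf
    simp
  refine ⟨hinv.toPerm, Equiv.ext hinv, Equiv.ext fun h => ?_⟩
  have h1 := hn (-1) h
  rw [zpow_neg_one] at h1
  rw [← map_inv]
  simp only [Equiv.Perm.coe_mul, Function.comp_apply, Function.Involutive.coe_toPerm,
    MulAction.toPermHom_apply, MulAction.toPerm_apply, smul_eq_mul, h1]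
  rw [← mul_assoc, ← mul_assoc, ← zpow_sub_one, ← zpow_one_add]
  ring_nf

section
variable {a b c d e f : ℤ}

lemma injective_toPermHom (B : Type*) [Group B] : Function.Injective (MulAction.toPermHom B B) :=
  MulAction.toPerm_injective

/-- For `d = c` killing `z` retracts `G` onto `BS(a,b)`. -/
lemma injective_XY_of_eq : Function.Injective (bsToXY a b c c e f) := by
  let φ : TriG a b c c e f →* BS a b :=
    triLift (bs a b) (bt a b) 1 (bs_rel a b) (by simp) (by simp)
  have : φ.comp (bsToXY a b c c e f) = MonoidHom.id _ :=
    bs_hom_ext (by simp [bsToXY_s, φ, triLift_x]) (by simp [bsToXY_t, φ, triLift_y])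
  exact Function.LeftInverse.injective (g := φ) (DFunLike.congr_fun this)

/-- For `d = -c` and `e` even, `BS(a,b)` acts on itself by left multiplication and `z` acts by an
involution that inverts `y ^ c`. -/
lemma injective_XY_of_neg (hc : c ≠ 0) (he : Even e) (hf : Even f) :
    Function.Injective (bsToXY a b c (-c) e f) := by
  let L := MulAction.toPermHom (BS a b) (BS a b)
  obtain ⟨τ, hτ, hτL⟩ := exists_involution_s2 (g := bt a b ^ c) (fun k hk => by
    rw [← zpow_mul] at hk
    exact (mul_eq_zero.1 (bt_zpow_eq_one hk)).resolve_left hc)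
  have hpow : ∀ k : ℤ, Even k → τ ^ k = 1 := by
    rintro _ ⟨k, rfl⟩
    rw [← Commute.mul_zpow (Commute.refl τ) k |>.trans (zpow_add τ k k).symm, hτ, one_zpow]
  let φ : TriG a b c (-c) e f →* Equiv.Perm (BS a b) :=
    triLift (L (bs a b)) (L (bt a b)) τ
      (by simp only [← map_zpow, ← map_inv, ← map_mul, bs_rel])
      (by rw [conj_eq_iff_semiconjBy, zpow_neg, ← map_zpow]; exact hτL)
      (by simp [hpow e he, hpow f hf])
  have : φ.comp (bsToXY a b c (-c) e f) = L :=
    bs_hom_ext (by simp [bsToXY_s, φ, triLift_x]) (by simp [bsToXY_t, φ, triLift_y])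
  refine Function.Injective.of_comp (f := φ) ?_
  rw [← MonoidHom.coe_comp, this]
  exact injective_toPermHom _

/-- For `f = e` killing `x` retracts `G` onto `BS(c,d)`. -/
lemma injective_YZ_of_eq : Function.Injective (bsToYZ a b c d e e) := by
  let φ : TriG a b c d e e →* BS c d :=
    triLift 1 (bs c d) (bt c d) (by simp) (bs_rel c d) (by simp)
  have : φ.comp (bsToYZ a b c d e e) = MonoidHom.id _ :=
    bs_hom_ext (by simp [bsToYZ_s, φ, triLift_y]) (by simp [bsToYZ_t, φ, triLift_z])
  exact Function.LeftInverse.injective (g := φ) (DFunLike.congr_fun this)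

/-- The endomorphism of `BS(c,±c)` fixing `s` and inverting `t`. -/
def flipHom (hd : d = c ∨ d = -c) : BS c d →* BS c d :=
  bsLift (bs c d) (bt c d)⁻¹ (by
    have h := conj_eq_iff_semiconjBy.1 (bs_rel c d)
    rw [conj_eq_iff_semiconjBy]
    rcases hd with rfl | rfl
    · exact h.inv_symm_left
    · rw [zpow_neg] at h ⊢
      exact (inverts_symm h).inv_symm_left)

lemma flipHom_involutive (hd : d = c ∨ d = -c) : Function.Involutive (flipHom hd) := by
  have : (flipHom hd).comp (flipHom hd) = MonoidHom.id _ :=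
    bs_hom_ext (by simp [flipHom, bsLift_s]) (by simp [flipHom, bsLift_t])
  exact DFunLike.congr_fun this

/-- For `f = -e` and `a ≡ b` modulo `2`, `BS(c,d)` acts on itself by left multiplication and `x`
acts by the automorphism fixing `y` and inverting `z`. -/
lemma injective_YZ_of_neg (hd : d = c ∨ d = -c) (hab : a % 2 = b % 2) :
    Function.Injective (bsToYZ a b c d e (-e)) := by
  let L := MulAction.toPermHom (BS c d) (BS c d)
  let σ : Equiv.Perm (BS c d) := (flipHom_involutive hd).toPerm
  have hσ : σ * σ = 1 := Equiv.ext (flipHom_involutive hd)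
  have hσL : ∀ g, SemiconjBy σ (L g) (L (flipHom hd g)) := fun g =>
    Equiv.ext fun h => by simp [σ, L]
  have hy : Commute σ (L (bs c d)) := by
    have := hσL (bs c d)
    rwa [flipHom, bsLift_s] at this
  have hz : SemiconjBy σ (L (bt c d)) (L (bt c d))⁻¹ := by
    have := hσL (bt c d)
    rwa [flipHom, bsLift_t, map_inv] at this
  have hpow : σ ^ a = σ ^ b := by
    have h1 : a = b + ((a - b) / 2 + (a - b) / 2) := by omega
    rw [h1, zpow_add, zpow_add, ← Commute.mul_zpow (Commute.refl σ), hσ, one_zpow, mul_one]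
  let φ : TriG a b c d e (-e) →* Equiv.Perm (BS c d) :=
    triLift σ (L (bs c d)) (L (bt c d))
      (by rw [conj_eq_iff_semiconjBy, hpow]; exact (hy.symm.zpow_right b))
      (by simp only [← map_zpow, ← map_inv, ← map_mul, bs_rel])
      (by
        rw [conj_eq_iff_semiconjBy, zpow_neg, ← inv_zpow]
        have := (hz.inv_right).zpow_right e
        rwa [inv_inv] at this)
  have : φ.comp (bsToYZ a b c d e (-e)) = L :=
    bs_hom_ext (by simp [bsToYZ_s, φ, triLift_y]) (by simp [bsToYZ_t, φ, triLift_z])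
  refine Function.Injective.of_comp (f := φ) ?_
  rw [← MonoidHom.coe_comp, this]
  exact injective_toPermHom _

end

/-! ### Free products inside amalgamated products -/

section
open Monoid

/-- The homomorphism from `ℤ / n` sending `1` to an element `g` with `g ^ n = 1`. -/
def zmodHom {M : Type*} [Group M] (n : ℕ) (g : M) (h : g ^ n = 1) : Multiplicative (ZMod n) →* M :=
  AddMonoidHom.toMultiplicativeLeft
    (ZMod.lift n ⟨zmultiplesHom (Additive M) (Additive.ofMul g), by
      simpa using congrArg Additive.ofMul h⟩)

lemma zmodHom_apply {M : Type*} [Group M] (n : ℕ) (g : M) (h : g ^ n = 1) (k : ℤ) :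
    zmodHom n g h (Multiplicative.ofAdd (k : ZMod n)) = g ^ k := by
  simp [zmodHom]

/-- Subgroups of the factors of an amalgamated product which meet the amalgamated subgroup
trivially generate their free product. -/
lemma coprodI_to_pushoutI_injective {ι : Type*} {K G : ι → Type*} {H : Type*}
    [∀ i, Group (K i)] [∀ i, Group (G i)] [Group H] (φ : ∀ i, H →* G i)
    (hφ : ∀ i, Function.Injective (φ i)) (κ : ∀ i, K i →* G i)
    (hκ : ∀ i k, κ i k ∈ (φ i).range → k = 1) :
    Function.Injective
      (CoprodI.lift fun i => (PushoutI.of (φ := φ) i).comp (κ i)) := by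
  classical
  rw [injective_iff_map_eq_one]
  intro g hg
  let w := CoprodI.Word.equiv g
  have hw : w.prod = g := CoprodI.Word.equiv.symm_apply_apply g
  let w' : CoprodI.Word G :=
    { toList := w.toList.map fun l => ⟨l.1, κ l.1 l.2⟩
      ne_one := by
        intro l hl
        obtain ⟨p, hp, rfl⟩ := List.mem_map.1 hl
        exact fun h => w.ne_one p hp (hκ _ _ (by simp only at h; rw [h]; exact one_mem _))
      chain_ne := by
        rw [List.isChain_map]
        exact w.chain_ne }
  have hred : PushoutI.Reduced φ w' := by
    intro l hl
    obtain ⟨p, hp, rfl⟩ := List.mem_map.1 hl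
    exact fun h => w.ne_one p hp (hκ _ _ h)
  have hprod : PushoutI.ofCoprodI (φ := φ) w'.prod = 1 := by
    rw [← hg, ← hw]
    simp only [CoprodI.Word.prod, w', map_list_prod, List.map_map]
    congr 1
  have hemp := hred.eq_empty_of_mem_range hφ (by rw [hprod]; exact one_mem _)
  have hnil : w.toList = [] := by
    simpa [w', CoprodI.Word.empty] using congrArg CoprodI.Word.toList hemp
  rw [← hw, CoprodI.Word.prod, hnil]
  rfl

end

section
variable {a b c d e f : ℤ}

lemma mem_normalizer_zpowers {Γ : Type*} [Group Γ] {t u v : Γ} (h : SemiconjBy t v u)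
    (hv : v = u ∨ v = u⁻¹) : t ∈ Subgroup.normalizer (Subgroup.zpowers u : Set Γ) := by
  have hvu : Subgroup.zpowers v = Subgroup.zpowers u := by rcases hv with rfl | rfl <;> simp
  have h' : t * v * t⁻¹ = u := by rw [h.eq, mul_inv_cancel_right]
  rw [Subgroup.mem_normalizer_iff]
  intro g
  constructor
  · intro hg
    rw [← hvu] at hg
    obtain ⟨k, rfl⟩ := hg
    exact ⟨k, by simp only [← conj_zpow, h']⟩
  · rintro ⟨k, hk⟩
    rw [← hvu]
    refine ⟨k, ?_⟩
    simp only [← h', conj_zpow] at hk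
    exact mul_left_cancel (mul_right_cancel hk)

lemma zpowers_normal {n : ℤ} (hf : f = n ∨ f = -n) :
    (Subgroup.zpowers (bs n f ^ n)).Normal := by
  rw [← Subgroup.normalizer_eq_top_iff, eq_top_iff]
  rintro g -
  refine PresentedGroup.generated_by _ _ ?_ g
  rintro (_ | _)
  · exact mem_normalizer_zpowers (Commute.self_zpow (bs n f) n) (Or.inl rfl)
  · exact mem_normalizer_zpowers (conj_eq_iff_semiconjBy.1 (bs_rel n f))
      (by rcases hf with h | h <;> simp [h])

/-- Let `k false` of infinite order and `k true` of order `n` lie in two factors amalgamated along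
infinite cyclic subgroups `⟨p false⟩ = ⟨p true⟩`, with `⟨k i⟩` meeting `⟨p i⟩` trivially. A
homomorphism from `BS(n,±n)` to the amalgamated product sending `s`, `t` to `k true`, `k false` has
kernel inside `⟨s ^ n⟩`, since `BS(n,±n) / ⟨s ^ n⟩` is the free product of `ℤ / n` and `ℤ`. -/
lemma mem_zpowers_of_map_eq_one {M : Type*} [Group M] {n : ℕ} (hf : f = n ∨ f = -n)
    (p k : Bool → M) (hp : ∀ i (m : ℤ), p i ^ m = 1 → m = 0) (hk : k true ^ n = 1)
    (hkt : ∀ m l : ℤ, k true ^ m = p true ^ l → (n : ℤ) ∣ m)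
    (hkf : ∀ m l : ℤ, k false ^ m = p false ^ l → m = 0)
    (ψ : BS n f →* Monoid.PushoutI (fun i => zpowersHom M (p i)))
    (hs : ψ (bs n f) = Monoid.PushoutI.of true (k true))
    (ht : ψ (bt n f) = Monoid.PushoutI.of false (k false))
    {g : BS n f} (hg : ψ g = 1) : g ∈ Subgroup.zpowers (bs n f ^ (n : ℤ)) := by
  -- The exponent `0` stands for the infinite cyclic group, as `ZMod 0 = ℤ`.
  let N : Bool → ℕ := fun i => cond i n 0
  have hkN : ∀ i, k i ^ N i = 1 := by
    rintro (_ | _)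
    exacts [pow_zero _, hk]
  let κ : ∀ i, Multiplicative (ZMod (N i)) →* M := fun i => zmodHom (N i) (k i) (hkN i)
  have hinj := coprodI_to_pushoutI_injective (fun i => zpowersHom M (p i))
    (fun i => by
      rw [injective_iff_map_eq_one]
      intro m hm
      exact Multiplicative.toAdd.injective (hp i _ hm)) κ
    (by
      intro i m
      obtain ⟨m, rfl⟩ := Multiplicative.ofAdd.surjective m
      obtain ⟨m, rfl⟩ := ZMod.intCast_surjective m
      rintro ⟨l, hl⟩
      rw [zmodHom_apply] at hl
      have hdvd : (N i : ℤ) ∣ m := by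
        cases i
        · rw [hkf m _ hl.symm]; exact dvd_zero _
        · exact hkt m _ hl.symm
      rw [(ZMod.intCast_zmod_eq_zero_iff_dvd _ _).2 hdvd, ofAdd_zero])
  set ρ := Monoid.CoprodI.lift fun i =>
    (Monoid.PushoutI.of (φ := fun i => zpowersHom M (p i)) i).comp (κ i) with hρ
  let gen : ∀ i, Monoid.CoprodI fun i => Multiplicative (ZMod (N i)) := fun i =>
    Monoid.CoprodI.of (i := i) (Multiplicative.ofAdd ((1 : ℤ) : ZMod (N i)))
  have hgen : ∀ i, ρ (gen i) = Monoid.PushoutI.of i (k i) := fun i => by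
    simp only [hρ, gen, Monoid.CoprodI.lift_of, MonoidHom.comp_apply, κ, zmodHom_apply, zpow_one]
  have hgn : gen true ^ n = 1 := by
    apply hinj
    rw [map_pow, hgen, ← map_pow, hk, map_one, map_one]
  -- `ψ` factors through the free product.
  let θ : BS n f →* Monoid.CoprodI fun i => Multiplicative (ZMod (N i)) :=
    bsLift (gen true) (gen false) (by
      rcases hf with rfl | rfl <;> simp [hgn])
  have hθ : ρ.comp θ = ψ :=
    bs_hom_ext (by simp [θ, bsLift_s, hgen, hs]) (by simp [θ, bsLift_t, hgen, ht])
  have hθg : θ g = 1 := hinj (by rw [map_one, ← hg, ← hθ]; rfl)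
  -- The free product maps back onto the quotient of `BS(n,±n)` by `⟨s ^ n⟩`.
  have := zpowers_normal hf
  let q := QuotientGroup.mk' (Subgroup.zpowers (bs n f ^ (n : ℤ)))
  let r : Bool → BS n f := fun i => cond i (bs n f) (bt n f)
  have hr : ∀ i, q (r i) ^ N i = 1 := by
    rintro (_ | _)
    · exact pow_zero _
    · rw [← map_pow]
      refine (QuotientGroup.eq_one_iff _).2 ?_
      rw [← zpow_natCast]
      exact Subgroup.mem_zpowers _
  let back := Monoid.CoprodI.lift fun i => zmodHom (N i) (q (r i)) (hr i)
  have hback : ∀ i, back (gen i) = q (r i) := fun i => by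
    simp only [back, gen, Monoid.CoprodI.lift_of, zmodHom_apply, zpow_one]
  have hq : back.comp θ = q :=
    bs_hom_ext (by simp [θ, bsLift_s, hback, r]) (by simp [θ, bsLift_t, hback, r])
  refine (QuotientGroup.eq_one_iff _).1 ?_
  change q g = 1
  rw [← hq, MonoidHom.comp_apply, hθg, map_one]

lemma addRight_one_zpow {R : Type*} [Ring R] (m : ℤ) (q : R) :
    ((Equiv.addRight (1 : R) : Equiv.Perm R) ^ m) q = q + m := by
  induction m generalizing q with
  | zero => simp
  | succ m ih => rw [zpow_add_one, Equiv.Perm.mul_apply, ih]; simp; abel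
  | pred m ih =>
    rw [zpow_sub_one, Equiv.Perm.mul_apply, ih]
    change q + -1 + _ = _
    push_cast
    abel

/-- The affine model of `BS(a,b)` on `ℚ`: `x` is translation by `1` and `y` is a dilation. -/
lemma exists_affine_model (ha : a ≠ 0) (hb : b ≠ 0) (hba : b ≠ a) (hba' : b ≠ -a) :
    ∃ X Y : Equiv.Perm ℚ, Y⁻¹ * X ^ a * Y = X ^ b ∧ (∀ m : ℤ, Y ^ m = 1 → m = 0) ∧
      ∀ m l : ℤ, X ^ m = Y ^ l → m = 0 := by
  have haQ : (a : ℚ) ≠ 0 := by exact_mod_cast ha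
  have hbQ : (b : ℚ) ≠ 0 := by exact_mod_cast hb
  let r : ℚ := a / b
  have hr : r ≠ 0 := div_ne_zero haQ hbQ
  let X : Equiv.Perm ℚ := Equiv.addRight 1
  let Y : Equiv.Perm ℚ := Equiv.mulLeft₀ r hr
  have hX : ∀ (m : ℤ) (q : ℚ), (X ^ m) q = q + m := by
    exact fun m q => addRight_one_zpow m q
  have hY : ∀ (m : ℤ) (q : ℚ), (Y ^ m) q = r ^ m * q := by
    intro m
    induction m with
    | zero => simp
    | succ m ih =>
      intro q
      rw [zpow_add_one, Equiv.Perm.mul_apply, ih, zpow_add_one₀ hr, mul_assoc]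
      rfl
    | pred m ih =>
      intro q
      rw [zpow_sub_one, Equiv.Perm.mul_apply, ih, zpow_sub_one₀ hr, mul_assoc]
      rfl
  refine ⟨X, Y, ?_, ?_, ?_⟩
  · rw [mul_assoc, inv_mul_eq_iff_eq_mul]
    ext q
    rw [Equiv.Perm.mul_apply, Equiv.Perm.mul_apply, hX, hX]
    simp only [Y, Equiv.mulLeft₀_apply, r]
    field_simp
  · intro m hm
    have h1 : r ^ m = 1 := by
      have := hY m 1
      rw [hm] at this
      simpa using this.symm
    have h2 : |r| ^ m = 1 := by rw [← abs_zpow, h1, abs_one]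
    by_contra hm0
    have h3 := (zpow_eq_one_iff_right₀ (abs_nonneg r) (by
      intro h4
      rw [abs_div, div_eq_one_iff_eq (abs_ne_zero.2 hbQ), abs_eq_abs] at h4
      rcases h4 with h4 | h4
      · exact hba (by exact_mod_cast h4.symm)
      · exact hba' (by have : a = -b := by exact_mod_cast h4
                       omega))).1 h2
    exact hm0 h3
  · intro m l h
    have h1 := hX m 0
    rw [h, hY] at h1
    simpa using h1.symm

/-- A common ambient group for both factors of the amalgamated product: `x` and `y` act on `ℚ`,
while `z` and `y ^ c` live in `ℤ / n` times the permutations of `ℤ`. -/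
abbrev FactorGroup (n : ℕ) := Equiv.Perm ℚ × Multiplicative (ZMod n) × Equiv.Perm ℤ

/-- If `z` has infinite order in `G(a,b;c,d;n,±n)` then `BS(n,±n)` embeds: `G` maps, with `z ^ n`
in the kernel, to an amalgamated product over `⟨y ^ c⟩` in which `x` and `z` generate the free
product of `ℤ` and `ℤ / n`. -/
lemma injective_ZX (ha : a ≠ 0) (hb : b ≠ 0) (hba : b ≠ a) (hba' : b ≠ -a) (hc : c ≠ 0)
    {n : ℕ} (hf : f = n ∨ f = -n) (hd : d = c ∨ d = -c ∧ Even n)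
    (hz : ∀ m : ℤ, gz a b c d n f ^ m = 1 → m = 0) :
    Function.Injective (bsToZX a b c d n f) := by
  obtain ⟨X, Y, hXY, hY, hXY'⟩ := exists_affine_model ha hb hba hba'
  let T : Equiv.Perm ℤ := Equiv.addRight 1
  have hT : ∀ m : ℤ, T ^ m = 1 → m = 0 := by
    intro m hm
    have := congrArg (fun σ : Equiv.Perm ℤ => σ 0) hm
    simpa [T, addRight_one_zpow] using this
  -- `ε` is the identity or the reflection of `ℤ`, according to the sign `δ` of `d / c`.
  obtain ⟨δ, hδ, ε, hεn, hεT⟩ : ∃ δ : ℤ, d = δ * c ∧ ∃ ε : Equiv.Perm ℤ, ε ^ n = 1 ∧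
      SemiconjBy ε (T ^ δ) T := by
    rcases hd with rfl | ⟨rfl, k, rfl⟩
    · exact ⟨1, by simp, 1, by simp, by simp⟩
    · refine ⟨-1, by simp, Equiv.neg ℤ, ?_, ?_⟩
      · rw [← two_mul, pow_mul]
        have : Equiv.neg ℤ ^ 2 = 1 := by ext; simp [sq]
        rw [this, one_pow]
      · ext q
        simp [T]
        ring
  let p : Bool → FactorGroup n := fun i => cond i (1, 1, T) (Y ^ c, 1, 1)
  let k : Bool → FactorGroup n := fun i => cond i (1, Multiplicative.ofAdd 1, ε) (X, 1, 1)
  let ι (i : Bool) : FactorGroup n →* Monoid.PushoutI (fun i => zpowersHom (FactorGroup n) (p i)) :=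
    Monoid.PushoutI.of (φ := fun i => zpowersHom (FactorGroup n) (p i)) i
  have hbase : ι false (p false) = ι true (p true) := by
    have h := fun i => Monoid.PushoutI.of_apply_eq_base (fun i => zpowersHom (FactorGroup n) (p i)) i
      (Multiplicative.ofAdd 1)
    simpa [ι] using (h false).trans (h true).symm
  have hktn : k true ^ n = 1 := by
    simp [k, hεn, ← ofAdd_nsmul]
  have hktn' : ι true (k true) ^ (n : ℤ) = 1 := by
    rw [zpow_natCast, ← map_pow, hktn, map_one]
  let φ : TriG a b c d n f →* Monoid.PushoutI (fun i => zpowersHom (FactorGroup n) (p i)) :=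
    triLift (ι false (k false)) (ι false (Y, 1, 1)) (ι true (k true))
      (by
        simp only [← map_zpow, ← map_inv, ← map_mul]
        congr 1
        simp [k, hXY])
      (by
        have h1 : ι false (Y, 1, 1) ^ c = ι true (p true) := by
          rw [← hbase, ← map_zpow]
          simp [p]
        rw [conj_eq_iff_semiconjBy, hδ, mul_comm δ, zpow_mul, h1, ← map_zpow]
        refine SemiconjBy.map ?_ (ι true)
        exact Prod.ext (by simp [k, p]) (Prod.ext (by simp [k, p]) (by simpa [k, p] using hεT.eq)))
      (by rcases hf with rfl | rfl <;> simp [hktn'])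
  rw [injective_iff_map_eq_one]
  intro g hg
  have hmem : g ∈ Subgroup.zpowers (bs n f ^ (n : ℤ)) := by
    refine mem_zpowers_of_map_eq_one hf p k ?_ hktn ?_ ?_ (φ.comp (bsToZX a b c d n f)) ?_ ?_ ?_
    · rintro (_ | _) m hm
      · have h1 : (Y ^ c) ^ m = 1 := by simpa [p] using congrArg Prod.fst hm
        rw [← zpow_mul] at h1
        exact (mul_eq_zero.1 (hY _ h1)).resolve_left hc
      · exact hT m (by simpa [p] using congrArg (fun u : FactorGroup n => u.2.2) hm)
    · intro m l h
      have h1 := congrArg (fun u : FactorGroup n => u.2.1) h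
      simp only [k, p, cond_true, Prod.pow_mk, one_zpow, ← ofAdd_zsmul] at h1
      rw [← ZMod.intCast_zmod_eq_zero_iff_dvd]
      simpa using h1
    · intro m l h
      have h1 : X ^ m = (Y ^ c) ^ l := by simpa [k, p] using congrArg Prod.fst h
      rw [← zpow_mul] at h1
      exact hXY' _ _ h1
    · rw [MonoidHom.comp_apply, bsToZX_s, triLift_z]
    · rw [MonoidHom.comp_apply, bsToZX_t, triLift_x]
    · rw [MonoidHom.comp_apply, hg, map_one]
  obtain ⟨m, rfl⟩ := hmem
  simp only [map_zpow, bsToZX_s] at hg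
  rw [← zpow_mul] at hg
  simp only [← zpow_mul]
  rw [hz _ hg, zpow_zero]

end

/-! ### The classification -/

/-- For `a, c, e > 0`, `b ≠ ±a`, `d = ±c` and `f = ±e`, the triangle `G(a,b;c,d;e,f)`
is developable exactly in the four listed cases. -/
theorem triangle_developable_iff (a b c d e f : ℤ)
    (ha : 0 < a) (hc : 0 < c) (he : 0 < e) (hb : b ≠ 0)
    (hba : b ≠ a) (hba' : b ≠ -a) (hd : d = c ∨ d = -c) (hf : f = e ∨ f = -e) :
    Developable a b c d e f ↔
      (d = c ∧ f = e) ∨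
      (d = c ∧ f = -e ∧ a % 2 = b % 2) ∨
      (d = -c ∧ f = e ∧ Even e) ∨
      (d = -c ∧ f = -e ∧ Even e ∧ a % 2 = b % 2) := by
  have hiff : ((d = c ∧ f = e) ∨ (d = c ∧ f = -e ∧ a % 2 = b % 2) ∨
      (d = -c ∧ f = e ∧ Even e) ∨ (d = -c ∧ f = -e ∧ Even e ∧ a % 2 = b % 2)) ↔
      (d = -c → Even e) ∧ (f = -e → a % 2 = b % 2) := by
    have h1 : d = c → d ≠ -c := by omega
    have h2 : f = e → f ≠ -e := by omega
    tauto
  rw [hiff]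
  constructor
  · rintro ⟨-, hYZ, hZX⟩
    have r₁ := conj_eq_iff_semiconjBy.1 (mul_inv_eq_one.1 (relXY a b c d e f))
    have r₂ := conj_eq_iff_semiconjBy.1 (mul_inv_eq_one.1 (relYZ a b c d e f))
    have r₃ := conj_eq_iff_semiconjBy.1 (mul_inv_eq_one.1 (relZX a b c d e f))
    lift c to ℕ using hc.le
    constructor
    · intro hdc
      by_contra hodd
      subst hdc
      have h := zpow_eq_one_of_odd r₁ r₂ r₃ hf (Int.not_even_iff_odd.1 hodd)
      rw [← bsToZX_t, ← map_zpow, map_eq_one_iff _ hZX] at h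
      have h0 : a ^ (2 * c) = b ^ (2 * c) := by have := bt_zpow_eq_one h; omega
      have h1 : |a| = |b| := by
        refine (pow_left_inj₀ (abs_nonneg a) (abs_nonneg b) (n := 2 * c) (by omega)).1 ?_
        rw [← abs_pow, ← abs_pow, h0]
      rcases abs_eq_abs.1 h1 with h1 | h1 <;> omega
    · intro hfe
      by_contra hab
      subst hfe
      have h := zpow_eq_one_of_parity r₁ r₂ r₃ (by omega) hd hab
      rw [← bsToYZ_t, ← map_zpow, map_eq_one_iff _ hYZ] at h
      have := bt_zpow_eq_one h
      omega
  · rintro ⟨hE, hP⟩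
    have hYZ : Function.Injective (bsToYZ a b c d e f) := by
      rcases hf with rfl | rfl
      · exact injective_YZ_of_eq
      · exact injective_YZ_of_neg hd (hP rfl)
    refine ⟨?_, hYZ, ?_⟩
    · rcases hd with rfl | rfl
      · exact injective_XY_of_eq
      · have hev := hE rfl
        exact injective_XY_of_neg hc.ne' hev (by rcases hf with rfl | rfl <;> simp [hev])
    · lift e to ℕ using he.le
      refine injective_ZX ha.ne' hb hba hba' hc.ne' hf ?_ ?_
      · rcases hd with h | h
        · exact Or.inl h
        · exact Or.inr ⟨h, by exact_mod_cast hE h⟩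
      · intro m hm
        rw [← bsToYZ_t, ← map_zpow, map_eq_one_iff _ hYZ] at hm
        exact bt_zpow_eq_one hm
end

section
/- The images of x, y, z in Q = Q(a,b;c,d;e,f) have finite order, and Q is universal among quotients of G(a,b;c,d;e,f) in which x, y, z have finite order: for every group H and every homomorphism φ : G(a,b;c,d;e,f) → H such that φ(x), φ(y), φ(z) each have finite order, φ factors through the canonical projection G(a,b;c,d;e,f) → Q (i.e., there exists a homomorphism ψ : Q → H with φ = ψ ∘ proj). -/
open FreeGroup in
/-- Relators of `Q(a,b;c,d;e,f)`: the triangle relators together with relators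
making `x`, `y`, `z` have finite order. -/
def qRels (a b c d e f : ℤ) : Set (FreeGroup TGen) :=
  triRels a b c d e f ∪
    {(of TGen.x) ^ ((b - a) ^ 2 * (b ^ (d - c).toNat - a ^ (d - c).toNat)),
     (of TGen.y) ^ ((d - c) ^ 2 * (d ^ (f - e).toNat - c ^ (f - e).toNat)),
     (of TGen.z) ^ ((f - e) ^ 2 * (f ^ (b - a).toNat - e ^ (b - a).toNat))}

/-- The group `Q(a,b;c,d;e,f)`. -/
abbrev QGroup (a b c d e f : ℤ) := PresentedGroup (qRels a b c d e f)

def qx (a b c d e f : ℤ) : QGroup a b c d e f := PresentedGroup.of TGen.x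
def qy (a b c d e f : ℤ) : QGroup a b c d e f := PresentedGroup.of TGen.y
def qz (a b c d e f : ℤ) : QGroup a b c d e f := PresentedGroup.of TGen.z

lemma lift_of_eq_mk {α : Type*} (rels : Set (FreeGroup α)) :
    FreeGroup.lift (PresentedGroup.of (rels := rels)) = PresentedGroup.mk rels := by
  ext x
  simp [PresentedGroup.of]

/-- The canonical projection `G(a,b;c,d;e,f) → Q(a,b;c,d;e,f)`. -/
def projQ (a b c d e f : ℤ) : TriG a b c d e f →* QGroup a b c d e f :=
  PresentedGroup.toGroup (f := PresentedGroup.of) (by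
    intro r hr
    rw [lift_of_eq_mk]
    exact mk_rel_eq_one (Set.mem_union_left _ hr))

section Conjugation

variable {H : Type*} [Group H]

lemma conj_pow_of_conj {x y : H} {β : ℕ} (h : y⁻¹ * x * y = x ^ β) (k : ℕ) :
    y⁻¹ * x ^ k * y = x ^ (β * k) := by
  have := conj_pow (i := k) (a := y⁻¹) (b := x)
  rw [inv_inv] at this
  rw [← this, h, pow_mul]

lemma conj_by_pow {x y : H} {β : ℕ} (h : y⁻¹ * x * y = x ^ β) (k : ℕ) :
    (y ^ k)⁻¹ * x * y ^ k = x ^ (β ^ k) := by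
  induction k with
  | zero => simp
  | succ k ih =>
    calc (y ^ (k + 1))⁻¹ * x * y ^ (k + 1) = y⁻¹ * ((y ^ k)⁻¹ * x * y ^ k) * y := by
          rw [pow_succ]; group
      _ = x ^ (β ^ (k + 1)) := by rw [ih, conj_pow_of_conj h, pow_succ, mul_comm]

/-- Conjugation by `y` carries the cyclic group generated by `x` into itself, because `a` is
invertible modulo the order of `x`. -/
lemma exists_conj_eq_pow {x y : H} {a b : ℤ} (hab : Int.gcd a b = 1) (hx : IsOfFinOrder x)
    (h : y⁻¹ * x ^ a * y = x ^ b) :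
    ∃ β : ℕ, 0 < β ∧ y⁻¹ * x * y = x ^ β ∧ x ^ (a * β) = x ^ b := by
  have hm : 0 < orderOf x := hx.orderOf_pos
  have hconj : ∀ k : ℤ, y⁻¹ * x ^ (a * k) * y = x ^ (b * k) := by
    intro k
    have := conj_zpow (i := k) (a := y⁻¹) (b := x ^ a)
    rw [inv_inv] at this
    rw [zpow_mul, ← this, h, zpow_mul]
  have hcop : Int.gcd a (orderOf x) = 1 := by
    obtain ⟨s, hs⟩ := Int.gcd_dvd_left a (orderOf x)
    obtain ⟨t, ht⟩ := Int.gcd_dvd_right a (orderOf x)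
    set g : ℤ := (Int.gcd a (orderOf x) : ℤ) with hg
    have ht0 : t ≠ 0 := by
      rintro rfl
      rw [mul_zero] at ht
      omega
    -- with `t = orderOf x / g`, the element `x ^ (a * t)` is trivial, hence so is `x ^ (b * t)`
    have h1 : x ^ (a * t) = 1 := by
      rw [← orderOf_dvd_iff_zpow_eq_one]
      refine ⟨s, ?_⟩
      rw [ht]
      nth_rewrite 1 [hs]
      ring
    have h2 : x ^ (b * t) = 1 := by
      rw [← hconj, h1]; simp
    rw [← orderOf_dvd_iff_zpow_eq_one, ht] at h2
    have h3 : g ∣ b := Int.dvd_of_mul_dvd_mul_right ht0 h2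
    have h4 : g ∣ (Int.gcd a b : ℤ) := Int.dvd_coe_gcd ⟨s, hs⟩ h3
    rw [hab] at h4
    rw [hg] at h4
    exact Nat.dvd_one.mp (by exact_mod_cast h4)
  obtain ⟨u, v, huv⟩ := Int.isCoprime_iff_gcd_eq_one.mpr hcop
  have hxu : x ^ (a * u) = x := by
    have : a * u = 1 - orderOf x * v := by linarith
    rw [this, zpow_sub, zpow_one, zpow_mul, zpow_natCast, pow_orderOf_eq_one]; simp
  -- adding `orderOf x` to the least residue makes the exponent positive
  have hpos : 0 ≤ (b * u) % (orderOf x : ℤ) := Int.emod_nonneg _ (by omega)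
  have hβ : y⁻¹ * x * y = x ^ (((b * u) % (orderOf x : ℤ)).toNat + orderOf x) := by
    have h5 := hconj u
    rw [hxu] at h5
    rw [h5, pow_add, pow_orderOf_eq_one, mul_one, ← zpow_natCast, Int.toNat_of_nonneg hpos,
      zpow_mod_orderOf]
  refine ⟨_, by omega, hβ, ?_⟩
  rw [mul_comm, zpow_mul, zpow_natCast, ← hβ, ← h]
  have := conj_zpow (i := a) (a := y⁻¹) (b := x)
  rwa [inv_inv] at this

/-- Mennicke's identity for three elements cyclically normalizing each other's cyclic groups;
`A`, `B`, `C` stand for the differences `β ^ δ - β`, `δ ^ ζ - δ`, `ζ ^ β - ζ`. -/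
lemma mennicke_identity {x y z : H} {β δ ζ A B C : ℕ}
    (hx : y⁻¹ * x * y = x ^ β) (hy : z⁻¹ * y * z = y ^ δ) (hz : x⁻¹ * z * x = z ^ ζ)
    (hA : β ^ δ = β + A) (hB : δ ^ ζ = δ + B) (hC : ζ ^ β = ζ + C) :
    x ^ A * y ^ B * z ^ C = 1 := by
  have h1 : x ^ A = (x ^ β)⁻¹ * ((y ^ δ)⁻¹ * x * y ^ δ) := by
    rw [conj_by_pow hx, hA, pow_add]; group
  have h2 : y ^ B = (y ^ δ)⁻¹ * ((z ^ ζ)⁻¹ * y * z ^ ζ) := by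
    rw [conj_by_pow hy, hB, pow_add]; group
  have h3 : z ^ C = (z ^ ζ)⁻¹ * ((x ^ β)⁻¹ * z * x ^ β) := by
    rw [conj_by_pow hz, hC, pow_add]; group
  rw [h1, h2, h3, ← hx, ← hy, ← hz]
  group

/-- Conjugating `y` by `z ^ C` and substituting the identity for `z ^ C` shows that
`x ^ (A * (β - 1))` is a power of `y`. It is therefore fixed by conjugation by `y`, which raises it
to the power `β`. -/
lemma zpow_mennicke_eq_one {x y z : H} {β δ A B C : ℕ}
    (hx : y⁻¹ * x * y = x ^ β) (hy : z⁻¹ * y * z = y ^ δ)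
    (h : x ^ A * y ^ B * z ^ C = 1) :
    x ^ ((A : ℤ) * ((β : ℤ) - 1) ^ 2) = 1 := by
  have hz : z ^ C = (y ^ B)⁻¹ * (x ^ A)⁻¹ := by
    rw [← mul_inv_rev, eq_inv_iff_mul_eq_one]
    exact mul_eq_one_comm.mp h
  have hxy : x ^ A * y * (x ^ A)⁻¹ = y ^ (δ ^ C) := by
    rw [← conj_by_pow hy C, hz]
    group
  have hpow : x ^ ((A : ℤ) * ((β : ℤ) - 1)) = y⁻¹ * y ^ (δ ^ C) := by
    rw [← hxy, ← mul_assoc, ← mul_assoc, conj_pow_of_conj hx A, ← zpow_natCast, ← zpow_natCast,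
      ← zpow_neg, ← zpow_add]
    congr 1; push_cast; ring
  have hconj : y⁻¹ * x ^ ((A : ℤ) * ((β : ℤ) - 1)) * y
      = x ^ ((β : ℤ) * ((A : ℤ) * ((β : ℤ) - 1))) := by
    have := conj_zpow (i := (A : ℤ) * ((β : ℤ) - 1)) (a := y⁻¹) (b := x)
    rw [inv_inv, hx] at this
    rw [← this, zpow_mul x (β : ℤ), zpow_natCast]
  have hfix : y⁻¹ * x ^ ((A : ℤ) * ((β : ℤ) - 1)) * y = x ^ ((A : ℤ) * ((β : ℤ) - 1)) := by
    rw [hpow]; group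
  have he : (A : ℤ) * ((β : ℤ) - 1) ^ 2
      = (β : ℤ) * ((A : ℤ) * ((β : ℤ) - 1)) - (A : ℤ) * ((β : ℤ) - 1) := by ring
  rw [he, zpow_sub, ← hconj, hfix, mul_inv_cancel]

/-- The additional relator of `Q` for the first generator holds for all finite-order solutions of
the three relations; the cyclic symmetry of the hypotheses yields the other two relators. -/
lemma zpow_relator_eq_one {x y z : H} {a b c d e f : ℤ}
    (hab : Int.gcd a b = 1) (hcd : Int.gcd c d = 1) (hef : Int.gcd e f = 1) (hcd' : c < d)
    (hx : IsOfFinOrder x) (hy : IsOfFinOrder y) (hz : IsOfFinOrder z)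
    (h1 : y⁻¹ * x ^ a * y = x ^ b) (h2 : z⁻¹ * y ^ c * z = y ^ d)
    (h3 : x⁻¹ * z ^ e * x = z ^ f) :
    x ^ ((b - a) ^ 2 * (b ^ (d - c).toNat - a ^ (d - c).toNat)) = 1 := by
  obtain ⟨β, hβ0, hβ, haβ⟩ := exists_conj_eq_pow hab hx h1
  obtain ⟨δ, hδ0, hδ, hcδ⟩ := exists_conj_eq_pow hcd hy h2
  obtain ⟨ζ, hζ0, hζ, -⟩ := exists_conj_eq_pow hef hz h3
  obtain ⟨A, hA⟩ := Nat.exists_eq_add_of_le (Nat.le_self_pow hδ0.ne' β)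
  obtain ⟨B, hB⟩ := Nat.exists_eq_add_of_le (Nat.le_self_pow hζ0.ne' δ)
  obtain ⟨C, hC⟩ := Nat.exists_eq_add_of_le (Nat.le_self_pow hβ0.ne' ζ)
  have hA1 := zpow_mennicke_eq_one hβ hδ (mennicke_identity hβ hδ hζ hA hB hC)
  set w : H := x ^ (((β : ℤ) - 1) ^ 2) with hw
  have hwy : y⁻¹ * w * y = w ^ β := by
    have := conj_zpow (i := ((β : ℤ) - 1) ^ 2) (a := y⁻¹) (b := x)
    rw [inv_inv, hβ] at this
    rw [hw, ← this, ← zpow_natCast, ← zpow_natCast, ← zpow_mul, ← zpow_mul, mul_comm]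
  have hwδ : w ^ (β ^ δ) = w ^ β := by
    have hwA : w ^ A = 1 := by
      rw [hw, ← zpow_natCast, ← zpow_mul, mul_comm]; exact hA1
    rw [hA, pow_add, hwA, mul_one]
  have hcomm : Commute w (y ^ ((δ : ℤ) - 1)) := by
    have h4 : (y ^ δ)⁻¹ * w * y ^ δ = y⁻¹ * w * y := by
      rw [conj_by_pow hwy, hwδ, hwy]
    have h5 : y ^ ((δ : ℤ) - 1) = y ^ δ * y⁻¹ := by
      rw [zpow_sub, zpow_natCast, zpow_one]
    rw [h5]
    calc w * (y ^ δ * y⁻¹) = y ^ δ * ((y ^ δ)⁻¹ * w * y ^ δ) * y⁻¹ := by group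
      _ = y ^ δ * y⁻¹ * w := by rw [h4]; group
  have hN : ((d - c).toNat : ℤ) = d - c := Int.toNat_of_nonneg (by omega)
  set N := (d - c).toNat
  -- `c * (δ - 1)` and `d - c` agree modulo the order of `y`
  have hcommN : Commute w (y ^ N) := by
    have h6 : y ^ N = (y ^ ((δ : ℤ) - 1)) ^ c := by
      rw [← zpow_natCast, hN, ← zpow_mul, zpow_sub, ← hcδ, ← zpow_sub]
      congr 1; ring
    rw [h6]
    exact hcomm.zpow_right c
  have hwN : x ^ (((β : ℤ) - 1) ^ 2 * ((β : ℤ) ^ N - 1)) = 1 := by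
    have h7 : w ^ (β ^ N) = w := by
      rw [← conj_by_pow hwy, mul_assoc, hcommN.eq]; group
    rw [zpow_mul, ← hw, zpow_sub, zpow_one, mul_inv_eq_one]
    exact_mod_cast h7
  have hmod : a * β ≡ b [ZMOD (orderOf x : ℤ)] := zpow_eq_zpow_iff_modEq.mp haβ
  have hE : (a * β - a) ^ 2 * ((a * β) ^ N - a ^ N)
      ≡ (b - a) ^ 2 * (b ^ N - a ^ N) [ZMOD (orderOf x : ℤ)] :=
    ((hmod.sub_right a).pow 2).mul ((hmod.pow N).sub_right _)
  rw [← zpow_eq_zpow_iff_modEq.mpr hE]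
  have h8 : (a * β - a) ^ 2 * ((a * β) ^ N - a ^ N)
      = (((β : ℤ) - 1) ^ 2 * ((β : ℤ) ^ N - 1)) * (a ^ 2 * a ^ N) := by
    rw [mul_pow]; ring
  rw [h8, zpow_mul, hwN, one_zpow]

end Conjugation

lemma relator_exponent_ne_zero {a b : ℤ} {n : ℕ} (hn : n ≠ 0) (hab : Int.gcd a b = 1)
    (hlt : a < b) (hne : ¬(a = -1 ∧ b = 1)) : (b - a) ^ 2 * (b ^ n - a ^ n) ≠ 0 := by
  intro h
  rcases mul_eq_zero.mp h with h | h
  · have := pow_eq_zero_iff (two_ne_zero) |>.mp h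
    omega
  · have h1 : b.natAbs = a.natAbs := by
      have h2 := congrArg Int.natAbs (sub_eq_zero.mp h)
      rw [Int.natAbs_pow, Int.natAbs_pow] at h2
      exact Nat.pow_left_injective hn h2
    have h3 : a.natAbs = 1 := by
      rwa [Int.gcd_def, h1, Nat.gcd_self] at hab
    omega

/-- The images of `x`, `y`, `z` in `Q(a,b;c,d;e,f)` have finite order, and `Q` is
universal among quotients of `G(a,b;c,d;e,f)` in which `x`, `y`, `z` have finite order. -/
theorem q_universal (a b c d e f : ℤ)
    (ha : a ≠ 0) (hb : b ≠ 0) (hc : c ≠ 0) (hd : d ≠ 0) (he : e ≠ 0) (hf : f ≠ 0)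
    (hab : Int.gcd a b = 1) (hcd : Int.gcd c d = 1) (hef : Int.gcd e f = 1)
    (hab' : a < b) (hcd' : c < d) (hef' : e < f)
    (hab'' : ¬(a = -1 ∧ b = 1)) (hcd'' : ¬(c = -1 ∧ d = 1)) (hef'' : ¬(e = -1 ∧ f = 1)) :
    IsOfFinOrder (qx a b c d e f) ∧ IsOfFinOrder (qy a b c d e f) ∧
      IsOfFinOrder (qz a b c d e f) ∧
    ∀ (H : Type) [Group H] (φ : TriG a b c d e f →* H),
      IsOfFinOrder (φ (gx a b c d e f)) → IsOfFinOrder (φ (gy a b c d e f)) →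
      IsOfFinOrder (φ (gz a b c d e f)) →
      ∃ ψ : QGroup a b c d e f →* H, φ = ψ.comp (projQ a b c d e f) := by
  refine ⟨?_, ?_, ?_, ?_⟩
  · refine isOfFinOrder_iff_zpow_eq_one.mpr
      ⟨_, relator_exponent_ne_zero (n := (d - c).toNat) (by omega) hab hab' hab'', ?_⟩
    exact mk_rel_eq_one (rels := qRels a b c d e f) (Or.inr (Or.inl rfl))
  · refine isOfFinOrder_iff_zpow_eq_one.mpr
      ⟨_, relator_exponent_ne_zero (n := (f - e).toNat) (by omega) hcd hcd' hcd'', ?_⟩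
    exact mk_rel_eq_one (rels := qRels a b c d e f) (Or.inr (Or.inr (Or.inl rfl)))
  · refine isOfFinOrder_iff_zpow_eq_one.mpr
      ⟨_, relator_exponent_ne_zero (n := (b - a).toNat) (by omega) hef hef' hef'', ?_⟩
    exact mk_rel_eq_one (rels := qRels a b c d e f) (Or.inr (Or.inr (Or.inr rfl)))
  · intro H _ φ hx hy hz
    have h1 : (φ (gy a b c d e f))⁻¹ * φ (gx a b c d e f) ^ a * φ (gy a b c d e f)
        = φ (gx a b c d e f) ^ b := by
      have h : (gy a b c d e f)⁻¹ * gx a b c d e f ^ a * gy a b c d e f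
          * (gx a b c d e f ^ b)⁻¹ = 1 :=
        mk_rel_eq_one (rels := triRels a b c d e f) (Or.inl rfl)
      simpa [mul_inv_eq_one] using congrArg φ (mul_inv_eq_one.mp h)
    have h2 : (φ (gz a b c d e f))⁻¹ * φ (gy a b c d e f) ^ c * φ (gz a b c d e f)
        = φ (gy a b c d e f) ^ d := by
      have h : (gz a b c d e f)⁻¹ * gy a b c d e f ^ c * gz a b c d e f
          * (gy a b c d e f ^ d)⁻¹ = 1 :=
        mk_rel_eq_one (rels := triRels a b c d e f) (Or.inr (Or.inl rfl))
      simpa [mul_inv_eq_one] using congrArg φ (mul_inv_eq_one.mp h)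
    have h3 : (φ (gx a b c d e f))⁻¹ * φ (gz a b c d e f) ^ e * φ (gx a b c d e f)
        = φ (gz a b c d e f) ^ f := by
      have h : (gx a b c d e f)⁻¹ * gz a b c d e f ^ e * gx a b c d e f
          * (gz a b c d e f ^ f)⁻¹ = 1 :=
        mk_rel_eq_one (rels := triRels a b c d e f) (Or.inr (Or.inr rfl))
      simpa [mul_inv_eq_one] using congrArg φ (mul_inv_eq_one.mp h)
    have hrels : ∀ r ∈ qRels a b c d e f,
        FreeGroup.lift (fun g : TGen => φ (PresentedGroup.of g)) r = 1 := by
      have hlift : FreeGroup.lift (fun g : TGen => φ (PresentedGroup.of g))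
          = φ.comp (PresentedGroup.mk (triRels a b c d e f)) := by
        ext g
        simp [PresentedGroup.of]
      rintro r (hr | rfl | rfl | rfl)
      · rw [hlift, MonoidHom.comp_apply, mk_rel_eq_one hr, map_one]
      · rw [map_zpow, FreeGroup.lift_apply_of]
        exact zpow_relator_eq_one hab hcd hef hcd' hx hy hz h1 h2 h3
      · rw [map_zpow, FreeGroup.lift_apply_of]
        exact zpow_relator_eq_one hcd hef hab hef' hy hz hx h2 h3 h1
      · rw [map_zpow, FreeGroup.lift_apply_of]
        exact zpow_relator_eq_one hef hab hcd hab' hz hx hy h3 h1 h2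
    refine ⟨PresentedGroup.toGroup hrels, ?_⟩
    ext g
    simp [projQ]
end

section
/- Suppose 0 < a ≤ b, 0 < c ≤ d, and 1 ≤ f. Then for all positive integers R, S, T, the relation x^{T·b^{S·c^R}·(b^{S(d^R - c^R)} - a^{S(d^R - c^R)})} = z^{-R·f^{T·a^{S(d^R - c^R)}·b^{S·c^R}}} · y^{-S·c^R} · z^{R·f^{T·a^{S·d^R}}} · y^{S·d^R} holds in G(a,b;c,d;1,f). -/
/-- The relation `h⁻¹ g ^ p h = g ^ q` iterated `n` times, then raised to the power `k`. -/
theorem zpow_mul_pow_conj {G : Type*} [Group G] {g h : G} {p q : ℤ}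
    (H : g ^ p * h = h * g ^ q) (n : ℕ) (k : ℤ) :
    g ^ (k * p ^ n) * h ^ n = h ^ n * g ^ (k * q ^ n) := by
  induction n generalizing k with
  | zero => simp
  | succ n ih =>
    have H' (m : ℤ) : g ^ (m * p) * h = h * g ^ (m * q) := by
      have := (SemiconjBy.zpow_right (show SemiconjBy h (g ^ q) (g ^ p) from H.symm) m).eq
      rw [mul_comm m p, mul_comm m q, zpow_mul, zpow_mul, this]
    calc g ^ (k * p ^ (n + 1)) * h ^ (n + 1)
        = g ^ ((k * p) * p ^ n) * h ^ n * h := by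
          rw [pow_succ h, ← mul_assoc, pow_succ' p, ← mul_assoc k]
      _ = h ^ n * (g ^ ((k * q ^ n) * p) * h) := by
          rw [ih, mul_assoc, mul_right_comm]
      _ = h ^ (n + 1) * g ^ (k * q ^ (n + 1)) := by
          rw [H', ← mul_assoc, ← pow_succ, mul_assoc k, ← pow_succ]

/-- The computation in an arbitrary group, with all exponents that occur inside powers taken
to be natural numbers: `C = S c^R`, `C + E = S d^R`, `u = T a^(C+E)`, `v = T a^E b^C`. -/
theorem killer_of_relations {G : Type*} [Group G] {x y z : G} {a b c d f : ℤ}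
    (hx : x ^ a * y = y * x ^ b) (hy : y ^ c * z = z * y ^ d) (hz : z ^ (1 : ℤ) * x = x * z ^ f)
    (R C E u v : ℕ) (S T : ℤ) (hC : (C : ℤ) = S * c ^ R) (hD : ((C + E : ℕ) : ℤ) = S * d ^ R)
    (hu : (u : ℤ) = T * a ^ (C + E)) (hv : (v : ℤ) = T * a ^ E * b ^ C) :
    x ^ (T * b ^ C * (b ^ E - a ^ E)) =
      z ^ (-((R : ℤ) * f ^ v)) * y ^ (-(C : ℤ)) * z ^ ((R : ℤ) * f ^ u) *
        y ^ (((C + E : ℕ)) : ℤ) := by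
  have h1 : x ^ u * y ^ (C + E) = y ^ (C + E) * x ^ (T * b ^ (C + E)) := by
    rw [← zpow_mul_pow_conj hx, ← hu, zpow_natCast]
  have h2 : x ^ u * y ^ C = y ^ C * x ^ v := by
    have := zpow_mul_pow_conj hx C (T * a ^ E)
    rwa [← hv, show T * a ^ E * a ^ C = u by rw [hu]; ring, zpow_natCast, zpow_natCast] at this
  have h3 : y ^ C * z ^ R = z ^ R * y ^ (C + E) := by
    have := zpow_mul_pow_conj hy R S
    rwa [← hC, ← hD, zpow_natCast, zpow_natCast] at this
  have h4 (w : ℕ) : z ^ R * x ^ w = x ^ w * z ^ ((R : ℤ) * f ^ w) := by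
    have := zpow_mul_pow_conj hz w R
    rwa [one_pow, mul_one, zpow_natCast] at this
  have h5 : x ^ v * x ^ (T * b ^ C * (b ^ E - a ^ E)) = x ^ (T * b ^ (C + E)) := by
    rw [← zpow_natCast, ← zpow_add, hv]
    congr 1
    ring
  rw [zpow_neg, zpow_neg, zpow_natCast, zpow_natCast]
  -- Clear the inverses and multiply by `x ^ u` on the left, so that only positive powers
  -- of `x`, `y`, `z` have to be moved past each other.
  rw [mul_assoc (_⁻¹ * _⁻¹), mul_assoc _⁻¹, eq_inv_mul_iff_mul_eq, eq_inv_mul_iff_mul_eq]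
  apply mul_left_cancel (a := x ^ u)
  calc x ^ u * (y ^ C * (z ^ ((R : ℤ) * f ^ v) * x ^ (T * b ^ C * (b ^ E - a ^ E))))
      = (x ^ u * y ^ C) * z ^ ((R : ℤ) * f ^ v) * x ^ (T * b ^ C * (b ^ E - a ^ E)) := by group
    _ = y ^ C * (x ^ v * z ^ ((R : ℤ) * f ^ v)) * x ^ (T * b ^ C * (b ^ E - a ^ E)) := by
        rw [h2, mul_assoc (y ^ C)]
    _ = (y ^ C * z ^ R) * (x ^ v * x ^ (T * b ^ C * (b ^ E - a ^ E))) := by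
        rw [← h4]; simp only [mul_assoc]
    _ = z ^ R * (x ^ u * y ^ (C + E)) := by rw [h3, h5, h1, mul_assoc]
    _ = x ^ u * (z ^ ((R : ℤ) * f ^ u) * y ^ (C + E)) := by
        rw [← mul_assoc, h4, mul_assoc]

/-- The key relation of Lemma 1: for `0 < a ≤ b`, `0 < c ≤ d`, `1 ≤ f` and all
positive `R, S, T`, a certain power of `x` is a word in `y` and `z` in `G(a,b;c,d;1,f)`. -/
theorem killer_relation (a b c d f : ℤ)
    (ha : 0 < a) (hab : a ≤ b) (hc : 0 < c) (hcd : c ≤ d) (hf : 1 ≤ f)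
    (R S T : ℕ) (hR : 0 < R) (hS : 0 < S) (hT : 0 < T) :
    (gx a b c d 1 f) ^
        ((T : ℤ) * b ^ ((S : ℤ) * c ^ R).toNat *
          (b ^ ((S : ℤ) * (d ^ R - c ^ R)).toNat - a ^ ((S : ℤ) * (d ^ R - c ^ R)).toNat))
      =
      (gz a b c d 1 f) ^
          (-((R : ℤ) * f ^ ((T : ℤ) * a ^ ((S : ℤ) * (d ^ R - c ^ R)).toNat *
              b ^ ((S : ℤ) * c ^ R).toNat).toNat)) *
        (gy a b c d 1 f) ^ (-((S : ℤ) * c ^ R)) *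
        (gz a b c d 1 f) ^
          ((R : ℤ) * f ^ ((T : ℤ) * a ^ ((S : ℤ) * d ^ R).toNat).toNat) *
        (gy a b c d 1 f) ^ ((S : ℤ) * d ^ R) := by
  have rel (r : FreeGroup TGen) (hr : r ∈ triRels a b c d 1 f) :
      PresentedGroup.mk (triRels a b c d 1 f) r = 1 := PresentedGroup.one_of_mem hr
  have hx : gx a b c d 1 f ^ a * gy a b c d 1 f = gy a b c d 1 f * gx a b c d 1 f ^ b := by
    have := rel _ (Or.inl rfl)
    simp only [map_mul, map_inv, map_zpow] at this
    rw [mul_inv_eq_one, mul_assoc, inv_mul_eq_iff_eq_mul] at this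
    exact this
  have hy : gy a b c d 1 f ^ c * gz a b c d 1 f = gz a b c d 1 f * gy a b c d 1 f ^ d := by
    have := rel _ (Or.inr (Or.inl rfl))
    simp only [map_mul, map_inv, map_zpow] at this
    rw [mul_inv_eq_one, mul_assoc, inv_mul_eq_iff_eq_mul] at this
    exact this
  have hz : gz a b c d 1 f ^ (1 : ℤ) * gx a b c d 1 f =
      gx a b c d 1 f * gz a b c d 1 f ^ f := by
    have := rel _ (Or.inr (Or.inr rfl))
    simp only [map_mul, map_inv, map_zpow] at this
    rw [mul_inv_eq_one, mul_assoc, inv_mul_eq_iff_eq_mul] at this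
    exact this
  have hb : 0 < b := ha.trans_le hab
  have hpow : c ^ R ≤ d ^ R := pow_le_pow_left₀ hc.le hcd R
  obtain ⟨C, hC⟩ := Int.eq_ofNat_of_zero_le (show 0 ≤ (S : ℤ) * c ^ R by positivity)
  obtain ⟨E, hE⟩ := Int.eq_ofNat_of_zero_le
    (mul_nonneg (Int.natCast_nonneg S) (sub_nonneg.2 hpow))
  have hD : (S : ℤ) * d ^ R = ((C + E : ℕ) : ℤ) := by
    push_cast
    linarith
  obtain ⟨u, hu⟩ := Int.eq_ofNat_of_zero_le (show 0 ≤ (T : ℤ) * a ^ (C + E) by positivity)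
  obtain ⟨v, hv⟩ := Int.eq_ofNat_of_zero_le (show 0 ≤ (T : ℤ) * a ^ E * b ^ C by positivity)
  rw [hC, hE, hD]
  simp only [Int.toNat_natCast]
  rw [hu, hv]
  simp only [Int.toNat_natCast]
  exact killer_of_relations hx hy hz R C E u v S T hC.symm hD.symm hu.symm hv.symm
end

section
/- Let a, b, c, d, f be nonzero integers with b ≠ a, b ≠ -a, d ≠ c, and d ≠ -c. Then the image of x in G(a,b;c,d;1,f) has finite order. If moreover f ∉ {1, -1}, then the images of y and z in G(a,b;c,d;1,f) also have finite order. -/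
section Group

variable {G : Type*} [Group G]

/-- The Baumslag–Solitar relation, iterated. -/
lemma semiconj_pow {x y : G} {a b : ℤ} (h : SemiconjBy y (x ^ b) (x ^ a)) (m : ℕ) :
    SemiconjBy (y ^ m) (x ^ (b ^ m)) (x ^ (a ^ m)) := by
  induction m with
  | zero => simp
  | succ m ih =>
    rw [pow_succ y]
    have h1 := ih.zpow_right a
    have h2 := h.zpow_right (b ^ m)
    rw [← zpow_mul, ← zpow_mul] at h1 h2
    rw [← pow_succ] at h1
    rw [← pow_succ', mul_comm a] at h2
    exact SemiconjBy.mul_left h1 h2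

lemma ne_pow_of_ne {a b : ℤ} (h1 : b ≠ a) (h2 : b ≠ -a) {n : ℕ} (hn : n ≠ 0) : b ^ n ≠ a ^ n := by
  intro h
  have h' := congrArg Int.natAbs h
  rw [Int.natAbs_pow, Int.natAbs_pow] at h'
  have := Nat.pow_left_injective hn h'
  omega

/-- The element `y ^ (2 * m)` conjugates some positive power of `x` to a positive power of `x`, the
ratio of the exponents being `(b / a) ^ (2 * m)`. The even exponent makes this ratio positive. -/
lemma exists_conj {x y : G} {a b : ℤ} (ha : a ≠ 0) (hb : b ≠ 0)
    (h : SemiconjBy y (x ^ b) (x ^ a)) (m : ℤ) :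
    ∃ A B : ℕ, 0 < A ∧ 0 < B ∧ (B / A : ℚ) = (((b : ℚ) / a) ^ 2) ^ m ∧
      SemiconjBy (y ^ (2 * m)) (x ^ B) (x ^ A) := by
  have key : ∀ n : ℕ, SemiconjBy (y ^ (2 * n)) (x ^ ((b ^ 2).natAbs ^ n))
      (x ^ ((a ^ 2).natAbs ^ n)) := by
    intro n
    have := semiconj_pow h (2 * n)
    rw [pow_mul b, pow_mul a] at this
    rw [← zpow_natCast x, ← zpow_natCast x]
    push_cast
    simpa using this
  have ha' : 0 < (a ^ 2).natAbs := Int.natAbs_pos.2 (pow_ne_zero 2 ha)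
  have hb' : 0 < (b ^ 2).natAbs := Int.natAbs_pos.2 (pow_ne_zero 2 hb)
  have cast2 : ∀ t : ℤ, (((t ^ 2).natAbs : ℕ) : ℚ) = (t : ℚ) ^ 2 := by
    intro t
    rw [Nat.cast_natAbs]
    simp
  obtain ⟨n, rfl | rfl⟩ := m.eq_nat_or_neg
  · refine ⟨(a ^ 2).natAbs ^ n, (b ^ 2).natAbs ^ n, pow_pos ha' n, pow_pos hb' n, ?_, ?_⟩
    · rw [Nat.cast_pow, Nat.cast_pow, cast2, cast2, zpow_natCast, div_pow, div_pow]
    · exact_mod_cast key n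
  · refine ⟨(b ^ 2).natAbs ^ n, (a ^ 2).natAbs ^ n, pow_pos hb' n, pow_pos ha' n, ?_, ?_⟩
    · rw [Nat.cast_pow, Nat.cast_pow, cast2, cast2, zpow_neg, zpow_natCast, div_pow, div_pow,
        inv_div]
    · rw [mul_neg, zpow_neg]
      exact SemiconjBy.inv_symm_left (by exact_mod_cast key n)

/-- A power of `z` is moved past a power of `x` by means of `z x = x z^f`. -/
lemma zpow_mul_pow {x z : G} {f : ℤ} (h : SemiconjBy x (z ^ f) z) (j : ℤ) (n : ℕ) :
    z ^ j * x ^ n = x ^ n * z ^ (j * f ^ n) := by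
  have h1 : SemiconjBy x (z ^ f) (z ^ (1 : ℤ)) := by simpa using h
  have := (semiconj_pow h1 n).zpow_right j
  rw [← zpow_mul, ← zpow_mul, one_pow, one_mul, mul_comm] at this
  exact this.eq.symm

/-- Comparison of the action of `y ^ (2 * d)` on powers of `x` with the `z`-conjugate of the action
of `y ^ (2 * c)`. -/
lemma exists_key {x y z : G} {a b c d f : ℤ} (ha : a ≠ 0) (hb : b ≠ 0)
    (h1 : b ≠ a) (h2 : b ≠ -a) (h3 : d ≠ c)
    (hxy : SemiconjBy y (x ^ b) (x ^ a)) (hyz : SemiconjBy z (y ^ d) (y ^ c))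
    (hzx : SemiconjBy x (z ^ f) z) :
    ∃ (Y : G) (C D N M : ℕ) (P : ℤ), 0 < C ∧ Even N ∧ Even M ∧ P ≠ 0 ∧
      SemiconjBy Y (x ^ D) (x ^ C) ∧
      SemiconjBy Y (x ^ P * z ^ (1 - f ^ M)) (z ^ (1 - f ^ N)) := by
  obtain ⟨A, B, hA, hB, hAB, hc⟩ := exists_conj ha hb hxy c
  obtain ⟨C, D, hC, hD, hCD, hd⟩ := exists_conj ha hb hxy d
  have hne : B * C ≠ A * D := by
    intro h
    have haQ : (a : ℚ) ≠ 0 := by exact_mod_cast ha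
    have hbQ : (b : ℚ) ≠ 0 := by exact_mod_cast hb
    have hpos : 0 < ((b : ℚ) / a) ^ 2 := by positivity
    have hne1 : ((b : ℚ) / a) ^ 2 ≠ 1 := by
      rw [div_pow, Ne, div_eq_one_iff_eq (pow_ne_zero 2 haQ)]
      exact_mod_cast ne_pow_of_ne h1 h2 two_ne_zero
    refine h3 (zpow_right_injective₀ hpos hne1 ?_)
    change _ ^ d = _ ^ c
    rw [← hAB, ← hCD]
    have hA' : (A : ℚ) ≠ 0 := by exact_mod_cast hA.ne'
    have hC' : (C : ℚ) ≠ 0 := by exact_mod_cast hC.ne'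
    have hQ : (B * C : ℚ) = A * D := by exact_mod_cast h
    field_simp
    linarith
  have hz2 : z * y ^ (2 * d) = y ^ (2 * c) * z := by
    have := hyz.zpow_right 2
    rw [← zpow_mul, ← zpow_mul, mul_comm d, mul_comm c] at this
    exact this
  have e1 : y ^ (2 * c) * x ^ (B * (2 * C)) = x ^ (A * (2 * C)) * y ^ (2 * c) := by
    have := hc.pow_right (2 * C)
    rwa [← pow_mul, ← pow_mul] at this
  have e2 : y ^ (2 * d) * x ^ (D * (2 * A)) = x ^ (A * (2 * C)) * y ^ (2 * d) := by
    have := hd.pow_right (2 * A)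
    rw [← pow_mul, ← pow_mul] at this
    rw [show A * (2 * C) = C * (2 * A) by ring]
    exact this
  -- `z⁻¹ x^n z = x^n z^{1-f^n}`
  have hcz : ∀ n : ℕ, z⁻¹ * x ^ n * z = x ^ n * z ^ (1 - f ^ n) := by
    intro n
    have := zpow_mul_pow hzx (-1) n
    rw [zpow_neg_one] at this
    rw [this, mul_assoc, ← zpow_add_one]
    congr 2
    ring
  refine ⟨y ^ (2 * d), C, D, A * (2 * C), B * (2 * C),
    ((B * (2 * C) : ℕ) : ℤ) - ((D * (2 * A) : ℕ) : ℤ), hC, ⟨A * C, by ring⟩, ⟨B * C, by ring⟩,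
    ?_, hd, ?_⟩
  · rw [sub_ne_zero]
    intro h
    have h' : B * (2 * C) = D * (2 * A) := by exact_mod_cast h
    exact hne (by linarith)
  · have e3 : y ^ (2 * d) * (x ^ (B * (2 * C)) * z ^ (1 - f ^ (B * (2 * C)))) =
        x ^ (A * (2 * C)) * z ^ (1 - f ^ (A * (2 * C))) * y ^ (2 * d) := by
      rw [← hcz, ← hcz]
      have hY : y ^ (2 * d) = z⁻¹ * y ^ (2 * c) * z := by
        rw [mul_assoc, ← hz2, inv_mul_cancel_left]
      rw [hY]
      calc _ = z⁻¹ * (y ^ (2 * c) * x ^ (B * (2 * C))) * z := by group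
        _ = _ := by rw [e1]; group
    have e4 : y ^ (2 * d) * (x ^ (D * (2 * A)))⁻¹ = (x ^ (A * (2 * C)))⁻¹ * y ^ (2 * d) := by
      rw [eq_inv_mul_iff_mul_eq, ← mul_assoc, ← e2, mul_inv_cancel_right]
    change _ * _ = _ * _
    rw [sub_eq_neg_add, zpow_add, zpow_neg, zpow_natCast, zpow_natCast, mul_assoc, ← mul_assoc,
      e4, mul_assoc, e3, ← mul_assoc, ← mul_assoc, inv_mul_cancel, one_mul]

/-- Powers of `x^p z^j` agree with powers of `x^p` up to powers of `z`. -/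
lemma exists_pow_eq {x z : G} {f : ℤ} (h : SemiconjBy x (z ^ f) z) (p : ℕ) (j : ℤ) (n : ℕ) :
    ∃ k : ℤ, (x ^ p * z ^ j) ^ n = x ^ (p * n) * z ^ k := by
  induction n with
  | zero => exact ⟨0, by simp⟩
  | succ n ih =>
    obtain ⟨k, hk⟩ := ih
    refine ⟨k * f ^ p + j, ?_⟩
    rw [pow_succ, hk, mul_assoc, ← mul_assoc (z ^ k), zpow_mul_pow h, mul_add, mul_one, pow_add,
      zpow_add]
    simp only [mul_assoc]

/-- For `|f| ≥ 2`: if `Y` conjugates a power of `z` to `x^p z^j` with `p > 0`, and some positive power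
of `x` into `⟨x⟩`, then a positive power of `x` lies in `⟨z⟩`. -/
lemma exists_pow_eq_zpow {x z Y : G} {f : ℤ} (hf1 : f ≠ 1) (hf2 : f ≠ -1) (hf : f ≠ 0)
    (h : SemiconjBy x (z ^ f) z) {C D p : ℕ} {i j : ℤ} (hC : 0 < C) (hp : 0 < p)
    (hY : SemiconjBy Y (x ^ D) (x ^ C)) (hu : SemiconjBy Y (x ^ p * z ^ j) (z ^ i)) :
    ∃ (m : ℕ) (k : ℤ), 0 < m ∧ x ^ m = z ^ k := by
  -- `x ^ (2 * C)` conjugates `z` to `z ^ g`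
  obtain ⟨g, hg⟩ : ∃ g : ℕ, (g : ℤ) = f ^ (2 * C) :=
    ⟨(f ^ (2 * C)).toNat, Int.toNat_of_nonneg (by rw [pow_mul]; positivity)⟩
  have hg2 : 1 < g := by
    have hone : (1 : ℤ) < f ^ 2 := by
      have : f ≤ -2 ∨ 2 ≤ f := by omega
      rcases this with h | h <;> nlinarith
    have : (1 : ℤ) < g := by
      rw [hg, pow_mul]
      exact one_lt_pow₀ hone hC.ne'
    exact_mod_cast this
  have hY2 : Y * x ^ (D * 2) = x ^ (C * 2) * Y := by
    have := hY.pow_right 2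
    rwa [← pow_mul, ← pow_mul] at this
  have hug := (hu.pow_right g).eq
  have hz := zpow_mul_pow h i (C * 2)
  rw [mul_comm C 2, ← hg, zpow_mul, zpow_natCast, mul_comm 2 C] at hz
  have hconj : x ^ (D * 2) * (x ^ p * z ^ j) ^ g = x ^ p * z ^ j * x ^ (D * 2) := by
    apply mul_left_cancel (a := Y)
    rw [← mul_assoc, hY2, mul_assoc, hug, ← mul_assoc, ← hz, mul_assoc, ← hY2, ← mul_assoc,
      ← hu.eq, mul_assoc]
  obtain ⟨k, hk⟩ := exists_pow_eq h p j g
  obtain ⟨q, rfl⟩ : ∃ q, g = q + 1 := ⟨g - 1, by omega⟩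
  refine ⟨p * q, j * f ^ (D * 2) - k, Nat.mul_pos hp (by omega), ?_⟩
  rw [hk, mul_assoc (x ^ p), zpow_mul_pow h, ← mul_assoc, ← mul_assoc, ← pow_add, ← pow_add,
    show D * 2 + p * (q + 1) = (p + D * 2) + p * q by ring, pow_add _ (p + D * 2), mul_assoc] at hconj
  rw [zpow_sub, ← mul_left_cancel hconj, mul_inv_cancel_right]

/-- The theorem for an arbitrary triple of elements satisfying the relations. -/
lemma finite_order_of_relations {x y z : G} {a b c d f : ℤ} (ha : a ≠ 0) (hb : b ≠ 0) (hf : f ≠ 0)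
    (h1 : b ≠ a) (h2 : b ≠ -a) (h3 : d ≠ c) (h4 : d ≠ -c)
    (hxy : SemiconjBy y (x ^ b) (x ^ a)) (hyz : SemiconjBy z (y ^ d) (y ^ c))
    (hzx : SemiconjBy x (z ^ f) z) :
    IsOfFinOrder x ∧ (f ≠ 1 → f ≠ -1 → IsOfFinOrder y ∧ IsOfFinOrder z) := by
  obtain ⟨Y, C, D, N, M, P, hC, hN, hM, hP, hY, hu⟩ := exists_key ha hb h1 h2 h3 hxy hyz hzx
  by_cases hff : f = 1 ∨ f = -1
  · have hfN : f ^ N = 1 := by rcases hff with rfl | rfl <;> simp [hN.neg_one_pow]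
    have hfM : f ^ M = 1 := by rcases hff with rfl | rfl <;> simp [hM.neg_one_pow]
    refine ⟨isOfFinOrder_iff_zpow_eq_one.2 ⟨P, hP, ?_⟩, fun g1 g2 => absurd hff (by tauto)⟩
    have := hu.eq
    simpa [hfN, hfM] using this
  · have hf1 : f ≠ 1 := fun h => hff (Or.inl h)
    have hf2 : f ≠ -1 := fun h => hff (Or.inr h)
    obtain ⟨m, k, hm, hmk⟩ : ∃ (m : ℕ) (k : ℤ), 0 < m ∧ x ^ m = z ^ k := by
      obtain ⟨p, rfl | rfl⟩ := P.eq_nat_or_neg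
      · rw [zpow_natCast] at hu
        exact exists_pow_eq_zpow hf1 hf2 hf hzx hC (by omega) hY hu
      · -- for a negative exponent, pass to inverses
        have hu' := hu.inv_right
        rw [mul_inv_rev, zpow_neg, inv_inv, zpow_natCast, ← zpow_neg, ← zpow_neg,
          zpow_mul_pow hzx] at hu'
        exact exists_pow_eq_zpow hf1 hf2 hf hzx hC (by omega) hY hu'
    have hz : IsOfFinOrder z := by
      have hne : f ^ m - 1 ≠ 0 := by
        have := ne_pow_of_ne hf1 hf2 hm.ne'
        rw [one_pow] at this
        exact sub_ne_zero.2 this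
      refine isOfFinOrder_iff_zpow_eq_one.2 ⟨_, hne, ?_⟩
      have := zpow_mul_pow hzx 1 m
      rw [hmk, ← zpow_add, add_comm, zpow_add, one_mul] at this
      rw [zpow_sub, ← mul_left_cancel this, mul_inv_cancel]
    refine ⟨?_, fun _ _ => ⟨?_, hz⟩⟩
    · refine IsOfFinOrder.of_pow (n := m) ?_ hm.ne'
      rw [hmk]
      exact hz.zpow
    · obtain ⟨n, hn, hzn⟩ := isOfFinOrder_iff_pow_eq_one.1 hz
      have := (semiconj_pow hyz n).eq
      rw [hzn, one_mul, mul_one] at this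
      refine isOfFinOrder_iff_zpow_eq_one.2
        ⟨d ^ n - c ^ n, sub_ne_zero.2 (ne_pow_of_ne h3 h4 hn.ne'), ?_⟩
      rw [zpow_sub, this, mul_inv_cancel]

lemma semiconjBy_of_relator {g u v : G} (h : g⁻¹ * u * g * v⁻¹ = 1) : SemiconjBy g v u := by
  have := mul_inv_eq_one.1 h
  rw [SemiconjBy, ← this]
  group

end Group

/-- If `b ≠ ±a` and `d ≠ ±c` then `x` has finite order in `G(a,b;c,d;1,f)`;
if moreover `f ≠ ±1` then `y` and `z` also have finite order. -/
theorem x_finite_order (a b c d f : ℤ)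
    (ha : a ≠ 0) (hb : b ≠ 0) (hc : c ≠ 0) (hd : d ≠ 0) (hf : f ≠ 0)
    (h1 : b ≠ a) (h2 : b ≠ -a) (h3 : d ≠ c) (h4 : d ≠ -c) :
    IsOfFinOrder (gx a b c d 1 f) ∧
      (f ≠ 1 → f ≠ -1 →
        IsOfFinOrder (gy a b c d 1 f) ∧ IsOfFinOrder (gz a b c d 1 f)) := by
  have hr : ∀ r ∈ triRels a b c d 1 f, (PresentedGroup.mk (triRels a b c d 1 f)) r = 1 :=
    fun r hr => PresentedGroup.one_of_mem hr
  have r1 := hr _ (Or.inl rfl)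
  have r2 := hr _ (Or.inr (Or.inl rfl))
  have r3 := hr _ (Or.inr (Or.inr rfl))
  simp only [map_mul, map_inv, map_zpow] at r1 r2 r3
  have s3 := semiconjBy_of_relator r3
  rw [zpow_one] at s3
  exact finite_order_of_relations ha hb hf h1 h2 h3 h4 (semiconjBy_of_relator r1)
    (semiconjBy_of_relator r2) s3
end

section
/- Let a, b, c, d be nonzero integers with b ≠ a, b ≠ -a, d ≠ c, and d ≠ -c. Then in G(a,b;c,d;1,1) the image of x has finite order, while the images of y and z have infinite order. -/
/-- Relations `w x^q = x^p w` compose, multiplying the exponents. -/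
lemma semiconjBy_zpow_mul {G : Type*} [Group G] {x w v : G} {p q p' q' : ℤ}
    (h : SemiconjBy w (x ^ q) (x ^ p)) (h' : SemiconjBy v (x ^ q') (x ^ p')) :
    SemiconjBy (w * v) (x ^ (q * q')) (x ^ (p * p')) := by
  have e1 := h.zpow_right p'
  have e2 := h'.zpow_right q
  rw [← zpow_mul, ← zpow_mul] at e1 e2
  rw [mul_comm q' q, mul_comm p' q] at e2
  exact e1.mul_left e2

lemma exists_semiconjBy_zpow {G : Type*} [Group G] {x y : G} {a b : ℤ} (ha : a ≠ 0) (hb : b ≠ 0)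
    (h : SemiconjBy y (x ^ b) (x ^ a)) (n : ℤ) :
    ∃ p q : ℤ, p ≠ 0 ∧ q ≠ 0 ∧ (q / p : ℚ) = (b / a : ℚ) ^ n ∧
      SemiconjBy (y ^ n) (x ^ q) (x ^ p) := by
  have ha' : (a : ℚ) ≠ 0 := by exact_mod_cast ha
  have hb' : (b : ℚ) ≠ 0 := by exact_mod_cast hb
  have hr : (b / a : ℚ) ≠ 0 := div_ne_zero hb' ha'
  induction n using Int.induction_on with
  | zero => exact ⟨1, 1, by simp, by simp, by simp, by simp⟩
  | succ i ih =>
    obtain ⟨p, q, hp, hq, e, hs⟩ := ih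
    refine ⟨p * a, q * b, mul_ne_zero hp ha, mul_ne_zero hq hb, ?_, ?_⟩
    · rw [zpow_add_one₀ hr, ← e]
      push_cast
      rw [mul_div_mul_comm]
    · rw [zpow_add_one]
      exact semiconjBy_zpow_mul hs h
  | pred i ih =>
    obtain ⟨p, q, hp, hq, e, hs⟩ := ih
    refine ⟨p * b, q * a, mul_ne_zero hp hb, mul_ne_zero hq ha, ?_, ?_⟩
    · rw [zpow_sub_one₀ hr, ← e, inv_div]
      push_cast
      rw [mul_div_mul_comm]
    · rw [zpow_sub_one]
      exact semiconjBy_zpow_mul hs h.inv_symm_left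

lemma isOfFinOrder_of_triangle {G : Type*} [Group G] {x y z : G} {a b c d : ℤ}
    (ha : a ≠ 0) (hb : b ≠ 0) (h1 : b ≠ a) (h2 : b ≠ -a) (h3 : d ≠ c)
    (hxy : SemiconjBy y (x ^ b) (x ^ a)) (hyz : z⁻¹ * y ^ c * z = y ^ d) (hzx : Commute z x) :
    IsOfFinOrder x := by
  obtain ⟨p, q, hp, hq, e, hs⟩ := exists_semiconjBy_zpow ha hb hxy c
  obtain ⟨p', q', hp', hq', e', hs'⟩ := exists_semiconjBy_zpow ha hb hxy d
  have hs2 : SemiconjBy (y ^ d) (x ^ q) (x ^ p) := by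
    rw [← hyz]
    have hz (k : ℤ) : SemiconjBy z (x ^ k) (x ^ k) := hzx.zpow_right k
    exact (((hz p).inv_symm_left).mul_left hs).mul_left (hz q)
  -- Both relations for `y ^ d`, raised to have `x ^ (p * p')` on the right.
  have t1 := hs2.zpow_right p'
  have t2 := hs'.zpow_right p
  rw [← zpow_mul, ← zpow_mul] at t1 t2
  rw [mul_comm p' p] at t2
  have t3 : x ^ (q * p') = x ^ (q' * p) := mul_left_cancel (t1.eq.trans t2.eq.symm)
  have hne : q * p' - q' * p ≠ 0 := by
    intro h0
    have hpQ : (p : ℚ) ≠ 0 := by exact_mod_cast hp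
    have hpQ' : (p' : ℚ) ≠ 0 := by exact_mod_cast hp'
    have ha' : (a : ℚ) ≠ 0 := by exact_mod_cast ha
    have hb' : (b : ℚ) ≠ 0 := by exact_mod_cast hb
    have h5 : (q / p : ℚ) = q' / p' := by
      rw [div_eq_div_iff hpQ hpQ']
      exact_mod_cast sub_eq_zero.mp h0
    rw [e, e'] at h5
    have h6 := congrArg abs h5
    rw [abs_zpow, abs_zpow] at h6
    refine h3 (zpow_right_injective₀ (abs_pos.mpr (div_ne_zero hb' ha')) ?_ h6).symm
    rw [abs_div, Ne, div_eq_one_iff_eq (abs_ne_zero.mpr ha'), abs_eq_abs]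
    rintro (h | h)
    · exact h1 (by exact_mod_cast h)
    · exact h2 (by exact_mod_cast h)
  rw [isOfFinOrder_iff_zpow_eq_one]
  exact ⟨_, hne, by rw [zpow_sub, t3, mul_inv_cancel]⟩

/-- The universal property of `G(a,b;c,d;1,1)`, for homomorphisms that kill `x`. -/
lemma exists_hom_of_baumslagSolitar {H : Type*} [Group H] (a b c d : ℤ) (Y Z : H)
    (h : Z⁻¹ * Y ^ c * Z = Y ^ d) :
    ∃ φ : TriG a b c d 1 1 →* H, φ (gy a b c d 1 1) = Y ∧ φ (gz a b c d 1 1) = Z := by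
  let f : TGen → H := fun g => match g with
    | .x => 1
    | .y => Y
    | .z => Z
  have hf : ∀ r ∈ triRels a b c d 1 1, FreeGroup.lift f r = 1 := by
    rintro r (rfl | rfl | rfl)
    · simp [f]
    · simp [f, h]
    · simp [f]
  exact ⟨PresentedGroup.toGroup hf, PresentedGroup.toGroup.of hf, PresentedGroup.toGroup.of hf⟩

lemma addRight_one_zpow_s8 (n : ℤ) :
    (Equiv.addRight (1 : ℚ) : Equiv.Perm ℚ) ^ n = Equiv.addRight (n : ℚ) := by
  induction n using Int.induction_on with
  | zero => ext; simp
  | succ i ih =>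
    rw [zpow_add_one, ih]
    ext t
    simp only [Equiv.Perm.mul_apply, Equiv.coe_addRight]
    push_cast
    ring
  | pred i ih =>
    rw [zpow_sub_one, ih, mul_inv_eq_iff_eq_mul]
    ext t
    simp only [Equiv.Perm.mul_apply, Equiv.coe_addRight]
    push_cast
    ring

/-- If `b ≠ ±a` and `d ≠ ±c` then in `G(a,b;c,d;1,1)` the image of `x` has finite
order while the images of `y` and `z` have infinite order. -/
theorem x_finite_y_z_infinite (a b c d : ℤ)
    (ha : a ≠ 0) (hb : b ≠ 0) (hc : c ≠ 0) (hd : d ≠ 0)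
    (h1 : b ≠ a) (h2 : b ≠ -a) (h3 : d ≠ c) (h4 : d ≠ -c) :
    IsOfFinOrder (gx a b c d 1 1) ∧
      ¬ IsOfFinOrder (gy a b c d 1 1) ∧ ¬ IsOfFinOrder (gz a b c d 1 1) := by
  refine ⟨?_, ?_, ?_⟩
  · have r1 : (gy a b c d 1 1)⁻¹ * gx a b c d 1 1 ^ a * gy a b c d 1 1 *
        (gx a b c d 1 1 ^ b)⁻¹ = 1 :=
      PresentedGroup.one_of_mem (rels := triRels a b c d 1 1) (Or.inl rfl)
    have r2 : (gz a b c d 1 1)⁻¹ * gy a b c d 1 1 ^ c * gz a b c d 1 1 *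
        (gy a b c d 1 1 ^ d)⁻¹ = 1 :=
      PresentedGroup.one_of_mem (rels := triRels a b c d 1 1) (Or.inr (Or.inl rfl))
    have r3 : (gx a b c d 1 1)⁻¹ * gz a b c d 1 1 ^ (1 : ℤ) * gx a b c d 1 1 *
        (gz a b c d 1 1 ^ (1 : ℤ))⁻¹ = 1 :=
      PresentedGroup.one_of_mem (rels := triRels a b c d 1 1) (Or.inr (Or.inr rfl))
    rw [mul_inv_eq_one] at r1 r2 r3
    refine isOfFinOrder_of_triangle ha hb h1 h2 h3 ?_ r2 ?_
    · rw [SemiconjBy, ← r1]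
      group
    · rw [zpow_one, mul_assoc, inv_mul_eq_iff_eq_mul] at r3
      exact r3
  · have hcQ : (c : ℚ) ≠ 0 := by exact_mod_cast hc
    have hdQ : (d : ℚ) ≠ 0 := by exact_mod_cast hd
    obtain ⟨φ, hy, -⟩ := exists_hom_of_baumslagSolitar (H := Equiv.Perm ℚ) a b c d
      (Equiv.addRight 1) (Equiv.mulLeft₀ (c / d : ℚ) (div_ne_zero hcQ hdQ)) (by
        rw [mul_assoc, inv_mul_eq_iff_eq_mul]
        ext t
        simp only [addRight_one_zpow_s8, Equiv.Perm.mul_apply, Equiv.coe_addRight,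
          Equiv.mulLeft₀_apply]
        field_simp)
    intro h
    obtain ⟨n, hn, e⟩ := isOfFinOrder_iff_zpow_eq_one.mp (φ.isOfFinOrder h)
    rw [hy, addRight_one_zpow_s8] at e
    have e0 := Equiv.congr_fun e 0
    simp at e0
    exact hn e0
  · obtain ⟨φ, -, hz⟩ := exists_hom_of_baumslagSolitar (H := Multiplicative ℤ) a b c d
      1 (Multiplicative.ofAdd 1) (by simp)
    intro h
    obtain ⟨n, hn, e⟩ := isOfFinOrder_iff_zpow_eq_one.mp (φ.isOfFinOrder h)
    rw [hz, ← ofAdd_zsmul] at e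
    simp at e
    exact hn e
end

section
/- Let a, b be nonzero integers and n a nonzero integer. In the Baumslag–Solitar group BS(a,b), the centralizer of t^n equals the subgroup generated by s^a and t if a = b, or if a = -b and n is even; otherwise, the centralizer of t^n equals the cyclic subgroup generated by t. -/
/-! ### Centralizers of powers of the stable letter in an HNN extension -/

namespace BSCentralizer

open HNNExtension HNNExtension.NormalWord

section HNN

variable {G : Type*} [Group G] {A B : Subgroup G} (φ : A ≃* B)

/-- If `g₀ l` is a reduced word whose last letter is `t^u`, and left multiplication by `t^u` causes
no cancellation, then commuting with `t^{u(m+1)}` forces the words `t^{u(m+1)} g₀ l` and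
`g₀ l t^{u(m+1)}`, both reduced, to have matching syllables. The list `l` may be empty. -/
theorem syllable_of_commute (m : ℕ) (u : ℤˣ) (g₀ : G) (l : List (ℤˣ × G))
    (hl : l.IsChain (fun a b => a.2 ∈ toSubgroup A B a.1 → a.1 = b.1))
    (hlast : ∀ x ∈ l.getLast?, x.1 = u)
    (hfirst : ∀ y ∈ l.head?, g₀ ∈ toSubgroup A B u → u = y.1)
    (hcomm : Commute (ReducedWord.prod φ ⟨g₀, l, hl⟩) ((t ^ (u : ℤ)) ^ (m + 1))) :
    g₀ ∈ toSubgroup A B (-u) ∧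
      List.replicate (m + 1) u ++ l.map Prod.fst = l.map Prod.fst ++ List.replicate (m + 1) u := by
  have hrep : ∀ k : ℕ, (List.replicate k ((u, 1) : ℤˣ × G)).IsChain
      (fun a b => a.2 ∈ toSubgroup A B a.1 → a.1 = b.1) :=
    fun k => List.isChain_replicate_of_rel k (fun _ => rfl)
  let w₁ : ReducedWord G A B :=
    { head := 1
      toList := List.replicate m (u, 1) ++ (u, g₀) :: l
      chain := by
        refine (hrep m).append (List.isChain_cons.2 ⟨hfirst, hl⟩) ?_
        intro x hx y hy _
        have hx' := List.eq_of_mem_replicate (List.mem_of_mem_getLast? hx)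
        simp only [List.head?_cons, Option.mem_def, Option.some.injEq] at hy
        rw [hx', ← hy] }
  let w₂ : ReducedWord G A B :=
    { head := g₀
      toList := l ++ List.replicate (m + 1) (u, 1)
      chain := by
        refine hl.append (hrep (m + 1)) ?_
        intro x hx y hy _
        have hy' := List.eq_of_mem_replicate (List.mem_of_mem_head? hy)
        rw [hy', hlast x hx] }
  have hprod : w₁.prod φ = w₂.prod φ := by
    have := hcomm.eq
    simp only [ReducedWord.prod] at this
    simp only [ReducedWord.prod, w₁, w₂, List.map_append, List.prod_append, List.map_replicate,
      List.prod_replicate, List.map_cons, List.prod_cons, map_one, mul_one, one_mul]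
    rw [← mul_assoc (of g₀), this, pow_succ]
    simp only [mul_assoc]
  obtain ⟨h1, h2⟩ := ReducedWord.map_fst_eq_and_of_prod_eq φ hprod
  constructor
  · have := h2 u (by cases m <;> simp [w₁, List.replicate_succ])
    simpa [w₁, w₂] using this
  · simpa [w₁, w₂, List.replicate_succ'] using h1

theorem commute_unit_pow {x y : HNNExtension G A B φ} {m : ℕ} (u : ℤˣ)
    (h : Commute x (y ^ m)) : Commute x ((y ^ (u : ℤ)) ^ m) := by
  rcases Int.units_eq_one_or u with rfl | rfl
  · simpa using h
  · simpa using h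

/-- Induction on the length of a reduced word: either the first syllable can be absorbed by a power
of `t`, or the word has no occurrence of `t`. -/
theorem exists_prod_eq_zpow_mul_of (m : ℕ) (k : ℕ) : ∀ w : ReducedWord G A B,
    w.toList.length = k → Commute (w.prod φ) (t ^ (m + 1)) →
      ∃ (i : ℤ) (c : G), w.prod φ = t ^ i * of c := by
  induction k with
  | zero =>
    intro w hw _
    refine ⟨0, w.head, ?_⟩
    simp [ReducedWord.prod, List.length_eq_zero_iff.1 hw]
  | succ k ih =>
    rintro ⟨g₀, l, hl⟩ hw hcomm
    obtain _ | ⟨⟨u₁, g₁⟩, l'⟩ := l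
    · simp at hw
    have habs : g₀ ∈ toSubgroup A B (-u₁) := by
      by_contra hg
      obtain ⟨⟨u, g⟩, hlast⟩ : ∃ x, ((u₁, g₁) :: l').getLast? = some x :=
        ⟨_, List.getLast?_eq_some_getLast (by simp)⟩
      have key := syllable_of_commute φ m u g₀ ((u₁, g₁) :: l') hl
        (by intro x hx; rw [hlast] at hx; cases hx; rfl)
        (by
          intro y hy hmem
          cases hy
          by_contra hne
          have : u = -u₁ := by
            rcases Int.units_eq_one_or u with rfl | rfl <;>
              rcases Int.units_eq_one_or u₁ with rfl | rfl <;> simp_all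
          exact hg (this ▸ hmem))
        (commute_unit_pow φ u hcomm)
      have hu : u = u₁ := by
        have := congrArg List.head? key.2
        simpa [List.replicate_succ] using this
      exact hg (hu ▸ key.1)
    -- `t^{-u₁} g₀ t^{u₁}` is an element `c` of the base group.
    obtain ⟨c, hc⟩ : ∃ c : G, (of g₀ : HNNExtension G A B φ) * t ^ (u₁ : ℤ) =
        t ^ (u₁ : ℤ) * of c := by
      rcases Int.units_eq_one_or u₁ with rfl | rfl
      · exact ⟨_, by simpa using of_mul_t (φ := φ) ⟨g₀, by simpa using habs⟩⟩
      · exact ⟨_, by simpa using of_mul_inv_t (φ := φ) ⟨g₀, by simpa using habs⟩⟩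
    let w' : ReducedWord G A B := ⟨c * g₁, l', (List.isChain_cons.1 hl).2⟩
    have hww' : ReducedWord.prod φ ⟨g₀, (u₁, g₁) :: l', hl⟩ = t ^ (u₁ : ℤ) * w'.prod φ := by
      simp only [ReducedWord.prod, w', List.map_cons, List.prod_cons, map_mul]
      simp only [← mul_assoc]
      rw [hc]
    have hcomm' : Commute (w'.prod φ) (t ^ (m + 1)) := by
      have h1 : w'.prod φ = (t ^ (u₁ : ℤ))⁻¹ * ReducedWord.prod φ ⟨g₀, (u₁, g₁) :: l', hl⟩ := by
        rw [hww', inv_mul_cancel_left]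
      rw [h1]
      exact (((Commute.refl t).zpow_left _).inv_left.pow_right _).mul_left hcomm
    obtain ⟨i, d, hd⟩ := ih w' (by simpa [w'] using hw) hcomm'
    exact ⟨u₁ + i, d, by rw [hww', hd, zpow_add, mul_assoc]⟩

theorem exists_eq_zpow_mul_of (m : ℕ) (x : HNNExtension G A B φ)
    (hx : Commute x (t ^ (m + 1))) : ∃ (i : ℤ) (c : G), x = t ^ i * of c := by
  obtain ⟨d⟩ := TransversalPair.nonempty G A B
  have hprod : (x • (NormalWord.empty : NormalWord d)).prod φ = x := by
    rw [NormalWord.prod_smul, NormalWord.prod_empty, mul_one]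
  have := exists_prod_eq_zpow_mul_of φ m _ (x • (NormalWord.empty : NormalWord d)).toReducedWord rfl
  rw [hprod] at this
  exact this hx

theorem mem_of_commute_of (m : ℕ) (c : G)
    (h : Commute (of c : HNNExtension G A B φ) (t ^ (m + 1))) : c ∈ B := by
  have := (syllable_of_commute φ m 1 c [] List.isChain_nil (by simp) (by simp)
    (by simpa [ReducedWord.prod] using h)).1
  simpa using this

end HNN

/-! ### `BS(a,b)` as an HNN extension -/

theorem bs_rel (a b : ℤ) : bs a b ^ a * bt a b = bt a b * bs a b ^ b := by
  have h : (bt a b)⁻¹ * bs a b ^ a * bt a b * (bs a b ^ b)⁻¹ = 1 := by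
    have := PresentedGroup.one_of_mem (rels := bsRels a b) (Set.mem_singleton _)
    simpa [bs, bt, PresentedGroup.of] using this
  rw [mul_inv_eq_one, mul_assoc, inv_mul_eq_iff_eq_mul] at h
  exact h

theorem zpow_injective {a : ℤ} (ha : a ≠ 0) :
    Function.Injective (zpowGroupHom a : Multiplicative ℤ →* Multiplicative ℤ) := by
  intro x y h
  have h' : a * x.toAdd = a * y.toAdd := by
    simpa using congrArg Multiplicative.toAdd h
  exact Multiplicative.toAdd.injective (mul_left_cancel₀ ha h')

/-- The subgroup `aℤ` of `ℤ`, written multiplicatively. -/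
abbrev powers (a : ℤ) : Subgroup (Multiplicative ℤ) :=
  (zpowGroupHom a : Multiplicative ℤ →* Multiplicative ℤ).range

/-- The isomorphism `bℤ ≃ aℤ` sending `b k` to `a k`. -/
noncomputable def powersEquiv {a b : ℤ} (ha : a ≠ 0) (hb : b ≠ 0) : powers b ≃* powers a :=
  (MonoidHom.ofInjective (zpow_injective hb)).symm.trans (MonoidHom.ofInjective (zpow_injective ha))

theorem powersEquiv_apply {a b : ℤ} (ha : a ≠ 0) (hb : b ≠ 0) (x : Multiplicative ℤ)
    (hx : x ^ b ∈ powers b) : (powersEquiv ha hb ⟨x ^ b, hx⟩ : Multiplicative ℤ) = x ^ a := by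
  have : (⟨x ^ b, hx⟩ : powers b) = MonoidHom.ofInjective (zpow_injective hb) x := rfl
  rw [powersEquiv, this, MulEquiv.trans_apply, MulEquiv.symm_apply_apply]
  rfl

/-- The HNN extension of `ℤ` in which `t` conjugates `b` to `a`. -/
abbrev BSHNN {a b : ℤ} (ha : a ≠ 0) (hb : b ≠ 0) :=
  HNNExtension (Multiplicative ℤ) (powers b) (powers a) (powersEquiv ha hb)

/-- The homomorphism out of `BS(a,b)` determined by images `x` of `s` and `y` of `t`. -/
def bsLift {H : Type*} [Group H] {a b : ℤ} (x y : H) (h : x ^ a * y = y * x ^ b) : BS a b →* H :=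
  PresentedGroup.toGroup (f := fun g => BGen.casesOn g x y) (by
    rintro r hr
    rw [Set.mem_singleton_iff.1 hr]
    simp [mul_assoc, ← mul_assoc (x ^ a), h])

theorem bsLift_s {H : Type*} [Group H] {a b : ℤ} (x y : H) (h : x ^ a * y = y * x ^ b) :
    bsLift x y h (bs a b) = x :=
  PresentedGroup.toGroup.of _

theorem bsLift_t {H : Type*} [Group H] {a b : ℤ} (x y : H) (h : x ^ a * y = y * x ^ b) :
    bsLift x y h (bt a b) = y :=
  PresentedGroup.toGroup.of _

/-- The map `BS(a,b) → BSHNN` matching generators. -/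
noncomputable def toHNN {a b : ℤ} (ha : a ≠ 0) (hb : b ≠ 0) : BS a b →* BSHNN ha hb :=
  bsLift (of (Multiplicative.ofAdd 1)) t (by
    have h := t_mul_of (φ := powersEquiv ha hb) ⟨Multiplicative.ofAdd (1 : ℤ) ^ b, ⟨_, rfl⟩⟩
    have h2 : (powersEquiv ha hb ⟨Multiplicative.ofAdd (1 : ℤ) ^ b, ⟨_, rfl⟩⟩ :
        Multiplicative ℤ) = Multiplicative.ofAdd (1 : ℤ) ^ a := powersEquiv_apply ha hb _ _
    rw [h2, map_zpow, map_zpow] at h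
    exact h.symm)

/-- The map `BSHNN → BS(a,b)` matching generators. -/
noncomputable def ofHNN {a b : ℤ} (ha : a ≠ 0) (hb : b ≠ 0) : BSHNN ha hb →* BS a b :=
  lift (zpowersHom _ (bs a b)) (bt a b) (by
    rintro ⟨_, x, rfl⟩
    have h1 : (zpowGroupHom b x : Multiplicative ℤ) = x ^ b := rfl
    simp only [h1, powersEquiv_apply, map_zpow, zpowersHom_apply]
    rw [← zpow_mul, ← zpow_mul, mul_comm _ b, mul_comm _ a, zpow_mul, zpow_mul]
    have h : SemiconjBy (bt a b) (bs a b ^ b) (bs a b ^ a) := (bs_rel a b).symm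
    exact h.zpow_right _)

theorem ofHNN_toHNN {a b : ℤ} (ha : a ≠ 0) (hb : b ≠ 0) (x : BS a b) :
    ofHNN ha hb (toHNN ha hb x) = x := by
  have : (ofHNN ha hb).comp (toHNN ha hb) = MonoidHom.id _ := by
    refine PresentedGroup.ext fun g => ?_
    cases g
    · change ofHNN ha hb (toHNN ha hb (bs a b)) = bs a b
      simp [toHNN, ofHNN, bsLift_s]
    · change ofHNN ha hb (toHNN ha hb (bt a b)) = bt a b
      simp [toHNN, ofHNN, bsLift_t]
  exact DFunLike.congr_fun this x

/-! ### Elements of the centralizer -/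

theorem exists_eq_of_commute {a b n : ℤ} (ha : a ≠ 0) (hb : b ≠ 0) (hn : n ≠ 0) (x : BS a b)
    (hx : Commute x (bt a b ^ n)) : ∃ i k : ℤ, x = bt a b ^ i * (bs a b ^ a) ^ k := by
  obtain ⟨m, hm⟩ : ∃ m : ℕ, n.natAbs = m + 1 :=
    Nat.exists_eq_succ_of_ne_zero (Int.natAbs_ne_zero.2 hn)
  have hx' : Commute x (bt a b ^ (m + 1)) := by
    rw [← hm, ← zpow_natCast]
    rcases Int.natAbs_eq n with h | h
    · rwa [← h]
    · have h2 : (n.natAbs : ℤ) = -n := by lia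
      rw [h2, zpow_neg]
      exact hx.inv_right
  have htt : toHNN ha hb (bt a b) = t := bsLift_t ..
  have hy : Commute (toHNN ha hb x) (t ^ (m + 1)) := by
    have := hx'.map (toHNN ha hb)
    rwa [map_pow, htt] at this
  obtain ⟨i, c, hc⟩ := exists_eq_zpow_mul_of _ m _ hy
  have hcB : c ∈ powers a := by
    refine mem_of_commute_of (powersEquiv ha hb) m c ?_
    have h1 : of c = (t ^ i)⁻¹ * toHNN ha hb x := by rw [hc, inv_mul_cancel_left]
    rw [h1]
    exact (((Commute.refl t).zpow_left _).inv_left.pow_right _).mul_left hy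
  obtain ⟨k, rfl⟩ := hcB
  refine ⟨i, k.toAdd, ?_⟩
  have h := congrArg (ofHNN ha hb) hc
  rw [ofHNN_toHNN] at h
  rw [h, ← zpow_mul]
  have h1 : (zpowGroupHom a k : Multiplicative ℤ) = k ^ a := rfl
  simp [ofHNN, h1, ← zpow_mul, mul_comm]

/-- The affine action of `BS(a,b)` on `ℚ`, with `s` a unit translation and `t` scaling by `a/b`,
detects when a nontrivial power of `s` can commute with `t^n`. -/
theorem cases_of_commute {a b n j : ℤ} (ha : a ≠ 0) (hb : b ≠ 0) (hn : n ≠ 0) (hj : j ≠ 0)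
    (h : Commute (bs a b ^ j) (bt a b ^ n)) : a = b ∨ (a = -b ∧ Even n) := by
  have ha' : (a : ℚ) ≠ 0 := by exact_mod_cast ha
  have hb' : (b : ℚ) ≠ 0 := by exact_mod_cast hb
  have hab : (a / b : ℚ) ≠ 0 := div_ne_zero ha' hb'
  let x : Equiv.Perm ℚ := Equiv.addRight 1
  let y : Equiv.Perm ℚ := MulAction.toPerm (Units.mk0 _ hab)
  have hx : ∀ (k : ℤ) (q : ℚ), (x ^ k) q = q + k := by
    intro k q
    simp [x]
  have hy : ∀ (k : ℤ) (q : ℚ), (y ^ k) q = (a / b : ℚ) ^ k * q := by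
    intro k q
    have : y ^ k = MulAction.toPermHom ℚˣ ℚ (Units.mk0 _ hab ^ k) := by
      rw [map_zpow]; rfl
    rw [this]
    simp [MulAction.toPermHom, Units.smul_def]
  have hxy : x ^ a * y = y * x ^ b := by
    ext q
    have h1 : ∀ q, y q = (a / b : ℚ) * q := fun q => by simpa using hy 1 q
    simp only [Equiv.Perm.mul_apply, hx, h1]
    field_simp
  have hc := h.map (bsLift x y hxy)
  simp only [map_zpow, bsLift_s, bsLift_t] at hc
  have h0 : ((x ^ j * y ^ n) 0 : ℚ) = (y ^ n * x ^ j) 0 := by rw [hc.eq]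
  simp only [Equiv.Perm.mul_apply, hx, hy, mul_zero, zero_add] at h0
  have hj' : (j : ℚ) ≠ 0 := by exact_mod_cast hj
  have h1 : (a / b : ℚ) ^ n = 1 := by
    apply mul_right_cancel₀ hj'
    rw [← h0, one_mul]
  rcases zpow_eq_one_iff_cases₀.1 h1 with h2 | h2 | ⟨h2, h3⟩
  · exact absurd h2 hn
  · left
    rw [div_eq_one_iff_eq hb'] at h2
    exact_mod_cast h2
  · right
    rw [div_eq_iff hb'] at h2
    refine ⟨?_, h3⟩
    have : (a : ℚ) = -b := by rw [h2]; ring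
    exact_mod_cast this

theorem commute_of_cases {a b n : ℤ} (h : a = b ∨ (a = -b ∧ Even n)) :
    Commute (bs a b ^ a) (bt a b ^ n) := by
  have hrel : SemiconjBy (bt a b) (bs a b ^ b) (bs a b ^ a) := (bs_rel a b).symm
  rcases h with rfl | ⟨hab, k, rfl⟩
  · exact (Commute.zpow_left hrel n).symm
  · have hb : b = -a := by lia
    have h1 : SemiconjBy (bt a b) (bs a b ^ a)⁻¹ (bs a b ^ a) := by
      have h2 : bs a b ^ b = (bs a b ^ a)⁻¹ := by rw [← zpow_neg, ← hb]
      rwa [h2] at hrel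
    have h3 : Commute (bt a b * bt a b) (bs a b ^ a) := by
      have h4 := h1.inv_right
      rw [inv_inv] at h4
      exact h1.mul_left h4
    have h5 := h3.zpow_left k
    rw [(Commute.refl (bt a b)).mul_zpow, ← zpow_add] at h5
    exact h5.symm

end BSCentralizer

open BSCentralizer in
/-- Centralizers of powers of `t` in the Baumslag-Solitar group `BS(a,b)`. -/
theorem bs_centralizer (a b n : ℤ) (ha : a ≠ 0) (hb : b ≠ 0) (hn : n ≠ 0) :
    ((a = b ∨ (a = -b ∧ Even n)) →
        Subgroup.centralizer {(bt a b) ^ n} =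
          Subgroup.closure {(bs a b) ^ a, bt a b}) ∧
    (¬(a = b ∨ (a = -b ∧ Even n)) →
        Subgroup.centralizer {(bt a b) ^ n} = Subgroup.closure {bt a b}) := by
  have hmem : ∀ x, x ∈ Subgroup.centralizer {(bt a b) ^ n} ↔ Commute x (bt a b ^ n) :=
    fun x => by rw [Subgroup.mem_centralizer_singleton_iff]; exact Iff.rfl
  have ht : Commute (bt a b) (bt a b ^ n) := (Commute.refl _).zpow_right n
  constructor
  · intro h
    apply le_antisymm
    · intro x hx
      obtain ⟨i, k, rfl⟩ := exists_eq_of_commute ha hb hn x ((hmem x).1 hx)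
      exact mul_mem (zpow_mem (Subgroup.subset_closure (by simp)) _)
        (zpow_mem (Subgroup.subset_closure (by simp)) _)
    · rw [Subgroup.closure_le]
      rintro x (rfl | rfl)
      · exact (hmem _).2 (commute_of_cases h)
      · exact (hmem _).2 ht
  · intro h
    apply le_antisymm
    · intro x hx
      rw [hmem] at hx
      obtain ⟨i, k, rfl⟩ := exists_eq_of_commute ha hb hn x hx
      have hk : a * k = 0 := by
        by_contra hne
        refine h (cases_of_commute ha hb hn hne ?_)
        have h1 : bs a b ^ (a * k) = (bt a b ^ i)⁻¹ * (bt a b ^ i * (bs a b ^ a) ^ k) := by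
          rw [inv_mul_cancel_left, zpow_mul]
        rw [h1]
        exact (ht.zpow_left i).inv_left.mul_left hx
      rw [← zpow_mul, hk, zpow_zero, mul_one]
      exact zpow_mem (Subgroup.subset_closure (by simp)) _
    · rw [Subgroup.closure_le]
      rintro x rfl
      exact (hmem _).2 ht
end
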